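/- arXiv:2506.06934 — 3 statements merged into one kernel-verified Lean document; each statement's English description precedes it below -/
import Mathlib

section
/- Let n ≥ 3 and let G be a finite simple graph cospectral to the double star P_2(1,n). Then exactly one of the following holds: (1) G is isomorphic to P_2(1,n); (2) n is even, n/2 ≥ 2, and G is isomorphic to A_{n/2} + (n/2 − 1)K_1; (3) n is divisible by 4 and G is isomorphic to B_{n/4} + (3n/4 − 2)K_1 (where cases (2) and (3) coincide when n = 4). -/
/-!
The spectrum of `P₂(1,n)` is symmetric and has rank four, with positive eigenvalues `α > β`
satisfying `α² + β² = n + 2` and `α² β² = n`, so `(α² - 1)(β² - 1) = -1` and `β < 1 < α`. Hence a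
cospectral graph `G` has only one eigenvalue `≥ 1` and only one eigenvalue `≤ -1`. By interlacing
it contains no induced `2K₂` (eigenvalue `1` twice), no triangle (`-1` twice) and no induced
5-cycle (least eigenvalue double and below `-1`); see `no_twoEdges`, `no_triangle`, `no_pentagon`.
It also contains no induced half graph on six vertices, which has rank six (`no_halfGraph`).

These exclusions force `G` to be a two-step chain graph (`exists_chainType`): up to isolated
vertices it is bipartite with classes of sizes `p, q` on one side and `r, s` on the other, the
first class being joined to everything opposite and the second only to the class of size `r`.
Comparing the traces of `A²` and `A⁴` gives `pr + ps + qr = n + 2` and `pqrs = n`. The solutions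
with `n ≥ 3` (`solve_sizes`) are, up to exchanging the sides, `(1,1,1,n)`, `(1,1,n/2,2)` and
`(n/4,1,2,2)`, which are the three graphs of the classification; the number of vertices fixes the
number of isolated ones. The latter number also tells the three cases apart, except for the
second and third when `n = 4`.

No spectrum is computed explicitly: symmetric matrices with equal characteristic polynomials are
orthogonally similar (`exists_orthogonal_of_charpoly_eq`), so the bounds on eigenvalues
(`SecondLtOne`), on the rank and the traces are established for `P₂(1,n)` and carried over to `G`.
-/

open Polynomial SimpleGraph

/-- Characteristic polynomial (over ℝ) of the adjacency matrix of a finite simple graph: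
`det (x•I - A(G))`. -/
noncomputable def charPoly {V : Type} [Fintype V] [DecidableEq V] (G : SimpleGraph V) :
    Polynomial ℝ :=
  letI := Classical.decRel G.Adj
  Matrix.charpoly (SimpleGraph.adjMatrix ℝ G)

/-- The double star `P₂(a,b)`: an edge whose two endpoints carry `a` and `b` pendant
leaves respectively.  `Sum.inl none` and `Sum.inr none` are the two centers. -/
def doubleStar (a b : ℕ) : SimpleGraph (Option (Fin a) ⊕ Option (Fin b)) :=
  SimpleGraph.fromRel fun x y =>
    (x = Sum.inl none ∧ (y = Sum.inr none ∨ ∃ i, y = Sum.inl (some i))) ∨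
    (x = Sum.inr none ∧ ∃ j, y = Sum.inr (some j))

/-- Two finite graphs are cospectral if their adjacency matrices have the same
characteristic polynomial. -/
def Cospectral {V W : Type} [Fintype V] [DecidableEq V] [Fintype W] [DecidableEq W]
    (G : SimpleGraph V) (H : SimpleGraph W) : Prop :=
  charPoly G = charPoly H

/-- A graph is determined by its spectrum (DS) if every finite graph cospectral to it is
isomorphic to it. -/
def IsDS {V : Type} [Fintype V] [DecidableEq V] (G : SimpleGraph V) : Prop :=
  ∀ (W : Type) (_ : Fintype W) (_ : DecidableEq W) (H : SimpleGraph W),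
    Cospectral G H → Nonempty (G ≃g H)

/-- The graph `A_a`: `K_{2,a}` together with two new pendant vertices, both attached to the
fixed vertex `Sum.inl (Sum.inl 0)` of the partite set of size 2. -/
def graphA (a : ℕ) : SimpleGraph ((Fin 2 ⊕ Fin a) ⊕ Fin 2) :=
  SimpleGraph.fromRel fun x y =>
    (∃ i j, x = Sum.inl (Sum.inl i) ∧ y = Sum.inl (Sum.inr j)) ∨
    (∃ k, x = Sum.inl (Sum.inl 0) ∧ y = Sum.inr k)

/-- The graph `B_a`: `K_{4,a}` together with one new vertex adjacent to exactly two of the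
vertices of the partite set of size 4. -/
def graphB (a : ℕ) : SimpleGraph ((Fin 4 ⊕ Fin a) ⊕ Unit) :=
  SimpleGraph.fromRel fun x y =>
    (∃ i j, x = Sum.inl (Sum.inl i) ∧ y = Sum.inl (Sum.inr j)) ∨
    (∃ i : Fin 4, i.val < 2 ∧ x = Sum.inl (Sum.inl i) ∧ y = Sum.inr ())

/-- The graph `R`: a 4-cycle `0-1-2-3-0` with pendant vertices `4` and `5` attached to the
adjacent cycle vertices `0` and `1` respectively. -/
def graphR : SimpleGraph (Fin 6) :=
  SimpleGraph.fromRel fun x y =>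
    (x = 0 ∧ y = 1) ∨ (x = 1 ∧ y = 2) ∨ (x = 2 ∧ y = 3) ∨ (x = 3 ∧ y = 0) ∨
    (x = 0 ∧ y = 4) ∨ (x = 1 ∧ y = 5)

/-! ### Orthogonal similarity and interlacing -/

open Matrix in
/-- Real symmetric matrices with equal characteristic polynomials are orthogonally similar. -/
theorem exists_orthogonal_of_charpoly_eq {V W : Type} [Fintype V] [DecidableEq V] [Fintype W]
    [DecidableEq W] (A : Matrix V V ℝ) (B : Matrix W W ℝ) (hA : A.IsSymm) (hB : B.IsSymm)
    (h : B.charpoly = A.charpoly) :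
    ∃ U : Matrix V W ℝ, Uᵀ * U = 1 ∧ U * Uᵀ = 1 ∧ A = U * B * Uᵀ := by
  have hcard : Fintype.card V = Fintype.card W := by
    rw [← A.charpoly_natDegree_eq_dim, ← B.charpoly_natDegree_eq_dim, h]
  let e : V ≃ W := Fintype.equivOfCardEq hcard
  have hA' : A.IsHermitian := by
    rw [IsHermitian, conjTranspose_eq_transpose_of_trivial]; exact hA
  set B' : Matrix V V ℝ := B.submatrix e e with hB'def
  have hB' : B'.IsHermitian := by
    rw [IsHermitian, conjTranspose_eq_transpose_of_trivial]; exact hB.submatrix e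
  have hch : A.charpoly = B'.charpoly := by
    rw [← h]
    exact (charpoly_reindex e.symm B).symm
  have hev := (IsHermitian.eigenvalues_eq_eigenvalues_iff (hA := hA') (hB := hB')).2 hch
  have sA := hA'.spectral_theorem
  have sB := hB'.spectral_theorem
  rw [hev] at sA
  rw [Unitary.conjStarAlgAut_apply] at sA sB
  set Q : Matrix V V ℝ := hA'.eigenvectorUnitary.1 with hQ
  set R : Matrix V V ℝ := hB'.eigenvectorUnitary.1 with hR
  set D : Matrix V V ℝ := diagonal (RCLike.ofReal ∘ hB'.eigenvalues)
  have tr : ∀ M : Matrix V V ℝ, star M = Mᵀ := fun M => by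
    rw [star_eq_conjTranspose, conjTranspose_eq_transpose_of_trivial]
  have hQ1 : Qᵀ * Q = 1 := by rw [← tr]; exact Unitary.coe_star_mul_self _
  have hQ2 : Q * Qᵀ = 1 := by rw [← tr]; exact Unitary.coe_mul_star_self _
  have hR1 : Rᵀ * R = 1 := by rw [← tr]; exact Unitary.coe_star_mul_self _
  have hR2 : R * Rᵀ = 1 := by rw [← tr]; exact Unitary.coe_mul_star_self _
  rw [tr] at sA sB
  have key : A = (Q * Rᵀ) * B' * (Q * Rᵀ)ᵀ := by
    rw [sB, sA, transpose_mul, transpose_transpose]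
    calc Q * D * Qᵀ = Q * 1 * D * 1 * Qᵀ := by simp
      _ = _ := by rw [← hR1]; simp only [Matrix.mul_assoc]
  have hU1 : (Q * Rᵀ)ᵀ * (Q * Rᵀ) = 1 := by
    rw [transpose_mul, transpose_transpose]
    calc R * Qᵀ * (Q * Rᵀ) = R * (Qᵀ * Q) * Rᵀ := by simp only [Matrix.mul_assoc]
      _ = 1 := by rw [hQ1, Matrix.mul_one, hR2]
  have hU2 : (Q * Rᵀ) * (Q * Rᵀ)ᵀ = 1 := by
    rw [transpose_mul, transpose_transpose]
    calc Q * Rᵀ * (R * Qᵀ) = Q * (Rᵀ * R) * Qᵀ := by simp only [Matrix.mul_assoc]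
      _ = 1 := by rw [hR1, Matrix.mul_one, hQ2]
  refine ⟨(Q * Rᵀ).submatrix id e.symm, ?_, ?_, ?_⟩
  · rw [transpose_submatrix, submatrix_mul _ _ _ _ _ Function.bijective_id |>.symm, hU1]
    simp
  · rw [transpose_submatrix, submatrix_mul _ _ _ _ _ e.symm.bijective |>.symm, hU2]
    simp
  · have hBB : B = B'.submatrix e.symm e.symm := by ext; simp [hB'def]
    rw [hBB, transpose_submatrix, submatrix_mul _ _ _ _ _ e.symm.bijective |>.symm,
      submatrix_mul _ _ _ _ _ e.symm.bijective |>.symm, ← key]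
    simp

open Matrix in
/-- For symmetric `A`: all eigenvalues but possibly the largest one are less than `1`. This is
expressed through the quadratic form: `x ⬝ A x < x ⬝ x` for nonzero `x` orthogonal to some `v`
(where `v = 0` is allowed). -/
def SecondLtOne {V : Type} [Fintype V] (A : Matrix V V ℝ) : Prop :=
  ∃ v : V → ℝ, ∀ x : V → ℝ, x ≠ 0 → v ⬝ᵥ x = 0 → x ⬝ᵥ (A *ᵥ x) < x ⬝ᵥ x

open Matrix in
/-- Interlacing: the property passes to compressions `Eᵀ A E` by an isometry `E`. -/
theorem SecondLtOne.compress {V W : Type} [Fintype V] [Fintype W] [DecidableEq W]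
    {A : Matrix V V ℝ} (hA : SecondLtOne A) (E : Matrix V W ℝ) (hE : Eᵀ * E = 1) :
    SecondLtOne (Eᵀ * A * E) := by
  obtain ⟨v, hv⟩ := hA
  have hiso : ∀ x, (E *ᵥ x) ⬝ᵥ (E *ᵥ x) = x ⬝ᵥ x := fun x => by
    rw [dotProduct_mulVec, ← mulVec_transpose, mulVec_mulVec, hE, one_mulVec]
  refine ⟨Eᵀ *ᵥ v, fun x hx hvx => ?_⟩
  have h1 := hv (E *ᵥ x) (fun h0 => hx ?_) ?_
  · rw [hiso] at h1
    convert h1 using 1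
    rw [← mulVec_mulVec, ← mulVec_mulVec, dotProduct_mulVec x, vecMul_transpose]
  · have := hiso x
    rw [h0] at this
    simpa using this.symm
  · rw [dotProduct_mulVec, ← mulVec_transpose]; exact hvx

open Matrix in
/-- The matrix whose columns are the coordinate vectors of the vertices `φ i`. -/
def incl {V : Type} [DecidableEq V] {k : ℕ} (φ : Fin k → V) : Matrix V (Fin k) ℝ :=
  (1 : Matrix V V ℝ).submatrix id φ

open Matrix in
theorem incl_isometry {V : Type} [Fintype V] [DecidableEq V] {k : ℕ} (φ : Fin k → V)
    (hφ : Function.Injective φ) : (incl φ)ᵀ * incl φ = 1 := by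
  rw [incl, transpose_submatrix, ← submatrix_mul _ _ _ _ _ Function.bijective_id]
  simp [submatrix_one _ hφ]

open Matrix in
theorem incl_compress {V : Type} [Fintype V] [DecidableEq V] {k : ℕ} (φ : Fin k → V)
    (A : Matrix V V ℝ) : (incl φ)ᵀ * A * incl φ = A.submatrix φ φ := by
  ext i j
  simp [incl, Matrix.mul_apply, Matrix.one_apply]

open Matrix in
theorem not_secondLtOne_twoEdges :
    ¬ SecondLtOne !![0, 1, 0, 0; 1, 0, 0, 0; 0, 0, 0, 1; 0, 0, 1, (0 : ℝ)] := by
  rintro ⟨v, hv⟩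
  by_cases h : v 0 + v 1 = 0
  · have := hv ![1, 1, 0, 0] (fun h0 => by simpa using congrFun h0 0)
      (by simp [dotProduct, Fin.sum_univ_four]; linarith)
    simp [dotProduct, mulVec, Fin.sum_univ_four] at this
  · have := hv ![v 2 + v 3, v 2 + v 3, -(v 0 + v 1), -(v 0 + v 1)]
      (fun h0 => h (by have := congrFun h0 2; simp at this; linarith))
      (by simp [dotProduct, Fin.sum_univ_four]; ring)
    simp [dotProduct, mulVec, Fin.sum_univ_four] at this

open Matrix in
theorem not_secondLtOne_neg_triangle :
    ¬ SecondLtOne (-!![0, 1, 1; 1, 0, 1; 1, 1, (0 : ℝ)]) := by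
  rintro ⟨v, hv⟩
  by_cases h : v 0 = v 1
  · have := hv ![1, -1, 0] (fun h0 => by simpa using congrFun h0 0)
      (by simp [dotProduct, Fin.sum_univ_three]; linarith)
    simp [dotProduct, mulVec, Fin.sum_univ_three] at this
  · have := hv ![v 1 - v 2, v 2 - v 0, v 0 - v 1]
      (fun h0 => h (by have := congrFun h0 2; simp at this; linarith))
      (by simp [dotProduct, Fin.sum_univ_three]; ring)
    simp [dotProduct, mulVec, Fin.sum_univ_three] at this

open Matrix in
/-- The test plane is spanned by integral approximations of the eigenvectors of the 5-cycle for
its least eigenvalue `-(1 + √5) / 2`. -/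
theorem not_secondLtOne_neg_pentagon :
    ¬ SecondLtOne (-!![0, 1, 0, 0, 1; 1, 0, 1, 0, 0; 0, 1, 0, 1, 0; 0, 0, 1, 0, 1;
      1, 0, 0, 1, (0 : ℝ)]) := by
  rintro ⟨v, hv⟩
  have H : ∀ a b : ℝ, (a ≠ 0 ∨ b ≠ 0) →
      a * (3 * v 0 - 2 * v 1 + v 2 + v 3 - 2 * v 4) + b * (v 1 - 2 * v 2 + 2 * v 3 - v 4) = 0 →
      False := by
    intro a b hab h
    have := hv ![3 * a, -2 * a + b, a - 2 * b, a + 2 * b, -2 * a - b] (fun h0 => ?_)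
      (by simp [dotProduct, Fin.sum_univ_five]; linarith)
    · simp [dotProduct, mulVec, Fin.sum_univ_five] at this
      nlinarith [sq_nonneg a, sq_nonneg b]
    · have h1 := congrFun h0 0
      have h2 := congrFun h0 1
      simp at h1 h2
      subst h1
      simp at h2 hab
      exact hab h2
  by_cases h : 3 * v 0 - 2 * v 1 + v 2 + v 3 - 2 * v 4 = 0
  · exact H 1 0 (by simp) (by rw [h]; ring)
  · exact H (v 1 - 2 * v 2 + 2 * v 3 - v 4) (-(3 * v 0 - 2 * v 1 + v 2 + v 3 - 2 * v 4))
      (Or.inr (neg_ne_zero.2 h)) (by ring)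

open Matrix in
theorem rank_halfGraph :
    (!![0, 0, 0, 1, 0, 0; 0, 0, 0, 1, 1, 0; 0, 0, 0, 1, 1, 1;
        1, 1, 1, 0, 0, 0; 0, 1, 1, 0, 0, 0; 0, 0, 1, 0, 0, (0 : ℝ)]).rank = 6 := by
  set M : Matrix (Fin 6) (Fin 6) ℝ :=
    !![0, 0, 0, 1, 0, 0; 0, 0, 0, 1, 1, 0; 0, 0, 0, 1, 1, 1;
        1, 1, 1, 0, 0, 0; 0, 1, 1, 0, 0, 0; 0, 0, 1, 0, 0, (0 : ℝ)] with hM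
  have h : M * !![0, 0, 0, 1, -1, 0; 0, 0, 0, 0, 1, -1; 0, 0, 0, 0, 0, 1;
        1, 0, 0, 0, 0, 0; -1, 1, 0, 0, 0, 0; 0, -1, 1, 0, 0, (0 : ℝ)] = 1 := by
    ext i j
    fin_cases i <;> fin_cases j <;> simp [hM, Matrix.mul_apply, Fin.sum_univ_six]
  have := rank_of_isUnit M (IsUnit.of_mul_eq_one _ h)
  simpa using this

/-! ### Two-step chain graphs -/

/-- Adjacency pattern between the five vertex classes of a two-step chain graph: class `0` is
joined to classes `2` and `3`, class `1` to class `2` only, and class `4` is isolated. -/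
def chainAdj : Fin 5 → Fin 5 → Bool :=
  ![![false, false, true, true, false],
    ![false, false, true, false, false],
    ![true, true, false, false, false],
    ![true, false, false, false, false],
    ![false, false, false, false, false]]

/-- `G` is a two-step chain graph whose vertex classes, joined according to `chainAdj`, have
sizes `c 0, …, c 4` (empty classes are allowed). -/
def ChainType {V : Type} [Fintype V] (G : SimpleGraph V) (c : Fin 5 → ℕ) : Prop :=
  ∃ τ : V → Fin 5, (∀ x y, G.Adj x y ↔ chainAdj (τ x) (τ y) = true) ∧
    ∀ i, Fintype.card {x // τ x = i} = c i

theorem ChainType.iso {V W : Type} [Fintype V] [Fintype W] {G : SimpleGraph V}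
    {H : SimpleGraph W} {c : Fin 5 → ℕ} (hG : ChainType G c) (hH : ChainType H c) :
    Nonempty (G ≃g H) := by
  obtain ⟨τ, hτ, cτ⟩ := hG
  obtain ⟨σ, hσ, cσ⟩ := hH
  let e : ∀ i, {x // τ x = i} ≃ {y // σ y = i} := fun i =>
    Fintype.equivOfCardEq ((cτ i).trans (cσ i).symm)
  let f : V ≃ W := (Equiv.sigmaFiberEquiv τ).symm.trans
    ((Equiv.sigmaCongrRight e).trans (Equiv.sigmaFiberEquiv σ))
  have hf : ∀ x, σ (f x) = τ x := fun x => (e (τ x) ⟨x, rfl⟩).2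
  refine ⟨⟨f, ?_⟩⟩
  intro x y
  rw [hσ, hτ, hf, hf]

theorem ChainType.of_iso {V W : Type} [Fintype V] [Fintype W] {G : SimpleGraph V}
    {H : SimpleGraph W} {c : Fin 5 → ℕ} (hH : ChainType H c) (f : G ≃g H) :
    ChainType G c := by
  obtain ⟨σ, hσ, cσ⟩ := hH
  refine ⟨σ ∘ f, fun x y => ?_, fun i => ?_⟩
  · rw [← f.map_adj_iff, hσ]; rfl
  · rw [← cσ i]
    exact Fintype.card_congr (f.toEquiv.subtypeEquiv fun x => Iff.rfl)

/-- Exchanging the two sides of the bipartition. -/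
theorem ChainType.swap {V : Type} [Fintype V] {G : SimpleGraph V} {p q r s t : ℕ}
    (hG : ChainType G ![p, q, r, s, t]) : ChainType G ![r, s, p, q, t] := by
  obtain ⟨τ, hτ, cτ⟩ := hG
  let π : Fin 5 → Fin 5 := ![2, 3, 0, 1, 4]
  have hπ : ∀ i, π (π i) = i := by decide
  have hadj : ∀ i j, chainAdj (π i) (π j) = chainAdj i j := by decide
  refine ⟨π ∘ τ, fun x y => ?_, fun i => ?_⟩
  · rw [hτ]; simp [hadj]
  · have h1 : Fintype.card {x // (π ∘ τ) x = i} = Fintype.card {x // τ x = π i} :=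
      Fintype.card_congr (Equiv.subtypeEquivRight fun x =>
        ⟨fun h => by rw [← h]; exact (hπ _).symm, fun h => by
          change π (τ x) = i
          rw [h, hπ]⟩)
    rw [h1, cτ]
    fin_cases i <;> rfl

/-- When the classes `0` and `2` are nonempty, class `4` consists of all isolated vertices, so its
size is an invariant of the graph. -/
theorem ChainType.card_isolated {V : Type} [Fintype V] {G : SimpleGraph V} {c : Fin 5 → ℕ}
    (hG : ChainType G c) (h0 : c 0 ≠ 0) (h2 : c 2 ≠ 0) :
    Nat.card {x // ∀ y, ¬ G.Adj x y} = c 4 := by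
  obtain ⟨τ, hτ, cτ⟩ := hG
  rw [← cτ 4, ← Nat.card_eq_fintype_card]
  have n0 : ∃ a, τ a = 0 := by
    rw [← cτ 0] at h0
    obtain ⟨a⟩ := Fintype.card_pos_iff.1 (Nat.pos_of_ne_zero h0)
    exact ⟨a.1, a.2⟩
  have n2 : ∃ a, τ a = 2 := by
    rw [← cτ 2] at h2
    obtain ⟨a⟩ := Fintype.card_pos_iff.1 (Nat.pos_of_ne_zero h2)
    exact ⟨a.1, a.2⟩
  obtain ⟨a, ha⟩ := n0
  obtain ⟨b, hb⟩ := n2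
  refine Nat.card_congr (Equiv.subtypeEquivRight fun x => ?_)
  have key : ∀ i, chainAdj i 0 = false → chainAdj i 2 = false → i = 4 := by decide
  have key' : ∀ j, chainAdj 4 j = false := by decide
  constructor
  · intro h
    have h1 := h a
    have h2 := h b
    rw [hτ, ha] at h1
    rw [hτ, hb] at h2
    exact key _ (by simpa using h1) (by simpa using h2)
  · intro h y
    rw [hτ, h, key']
    simp

/-- A graph with an edge and without closed 5-walks (so without triangles and 5-cycles), induced
`2K₂` and induced half graphs of order 6 is a two-step chain graph. -/
theorem exists_chainType {V : Type} [Fintype V] (G : SimpleGraph V)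
    (hedge : ∃ a b, G.Adj a b)
    (pent : ∀ a b c d e, G.Adj a b → G.Adj b c → G.Adj c d → G.Adj d e → G.Adj e a → False)
    (two : ∀ a b c d, G.Adj a b → G.Adj c d → ¬ G.Adj a c → ¬ G.Adj a d → ¬ G.Adj b c →
      ¬ G.Adj b d → False)
    (half : ∀ x₁ x₂ x₃ y₁ y₂ y₃, G.Adj x₁ y₁ → ¬ G.Adj x₁ y₂ → ¬ G.Adj x₁ y₃ →
      G.Adj x₂ y₁ → G.Adj x₂ y₂ → ¬ G.Adj x₂ y₃ →
      G.Adj x₃ y₁ → G.Adj x₃ y₂ → G.Adj x₃ y₃ → False) :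
    ∃ c, ChainType G c := by
  classical
  -- A vertex `u` of maximum degree sees its whole opposite side.
  obtain ⟨a₀, b₀, hab⟩ := hedge
  obtain ⟨u, -, hu⟩ := Finset.exists_max_image Finset.univ (fun x => G.degree x) ⟨a₀, by simp⟩
  have hmax : ∀ x, (∀ y, G.Adj u y → G.Adj x y) → ∀ y, G.Adj x y → G.Adj u y := by
    intro x hx y hy
    have hsub : G.neighborFinset u ⊆ G.neighborFinset x := by
      intro z hz; simpa using hx z (by simpa using hz)
    have := Finset.eq_of_subset_of_card_le hsub (hu x (Finset.mem_univ _))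
    have h2 : y ∈ G.neighborFinset u := by rw [this]; simpa using hy
    simpa using h2
  obtain ⟨v, huv⟩ : ∃ v, G.Adj u v := by
    have h1 : 0 < G.degree a₀ := (G.degree_pos_iff_exists_adj a₀).2 ⟨b₀, hab⟩
    exact (G.degree_pos_iff_exists_adj u).1 (h1.trans_le (hu a₀ (Finset.mem_univ _)))
  -- `S` is the side of the bipartition that contains `u`.
  let S : V → Prop := fun x => ∃ a, G.Adj u a ∧ G.Adj a x
  have hSS : ∀ x y, G.Adj x y → S x → S y → False := by
    rintro x y hxy ⟨a, hua, hax⟩ ⟨b, hub, hby⟩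
    exact pent u a x y b hua hax hxy hby.symm hub.symm
  have hSor : ∀ x y, G.Adj x y → S x ∨ S y := by
    intro x y hxy
    by_contra hcon
    rw [not_or] at hcon
    obtain ⟨h1, h2⟩ := hcon
    exact two u v x y huv hxy (fun h => h2 ⟨x, h, hxy⟩) (fun h => h1 ⟨y, h, hxy.symm⟩)
      (fun h => h1 ⟨v, huv, h⟩) (fun h => h2 ⟨v, huv, h⟩)
  have hSu : ∀ y, G.Adj u y → ¬ S y := fun y hy hS => hSS u y hy ⟨v, huv, huv.symm⟩ hS
  -- Neighbourhoods of vertices of `S` are nested.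
  have hnest : ∀ x x', S x → S x' → ∀ y y', G.Adj x y → ¬ G.Adj x' y → G.Adj x' y' →
      ¬ G.Adj x y' → False := by
    intro x x' hx hx' y y' h1 h2 h3 h4
    refine two x y x' y' h1 h3 (fun h => hSS _ _ h hx hx') h4 (fun h => h2 h.symm) ?_
    intro h
    rcases hSor _ _ h with h | h
    · exact hSS _ _ h1 hx h
    · exact hSS _ _ h3 hx' h
  have hsub : ∀ x, S x → ∀ y, G.Adj x y → G.Adj u y := by
    intro x hx y hxy
    by_contra hn
    refine hn (hmax x (fun z hz => ?_) y hxy)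
    by_contra hxz
    exact hnest x u hx ⟨v, huv, huv.symm⟩ y z hxy hn hz hxz
  -- `R` is the one possible smaller neighbourhood.
  obtain ⟨R, hRu, hR⟩ : ∃ R : V → Prop, (∀ y, R y → G.Adj u y) ∧
      ∀ x, S x → (∀ y, G.Adj x y ↔ G.Adj u y) ∨ (∀ y, G.Adj x y ↔ R y) := by
    by_cases hex : ∃ w, S w ∧ ¬ ∀ y, G.Adj w y ↔ G.Adj u y
    · obtain ⟨w, hw, hne⟩ := hex
      refine ⟨fun y => G.Adj w y, hsub w hw, fun x hx => ?_⟩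
      by_contra hcon
      rw [not_or] at hcon
      obtain ⟨hxu, hxw⟩ := hcon
      have strict : ∀ x, S x → (¬ ∀ y, G.Adj x y ↔ G.Adj u y) →
          ∃ y, G.Adj u y ∧ ¬ G.Adj x y := by
        intro x hx h
        by_contra hc
        push Not at hc
        exact h fun y => ⟨hsub x hx y, hc y⟩
      have main : ∀ x x' y, S x → S x' → (¬ ∀ y, G.Adj x' y ↔ G.Adj u y) →
          G.Adj x' y → ¬ G.Adj x y → False := by
        intro x x' y hx hx' hne' h1 h2
        obtain ⟨z, hz, hz'⟩ := strict x' hx' hne'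
        obtain ⟨a, hua, hax⟩ := hx
        have hx : S x := ⟨a, hua, hax⟩
        have incl : ∀ t, G.Adj x t → G.Adj x' t := by
          intro t ht
          by_contra hn
          exact hnest x x' hx hx' t y ht hn h1 h2
        exact half x x' u a y z hax.symm h2 (fun h => hz' (incl z h)) (incl a hax.symm) h1 hz'
          hua (hsub x' hx' y h1) hz
      refine hxw fun y => ⟨fun h => ?_, fun h => ?_⟩
      · by_contra hn
        exact main w x y hw hx hxu h hn
      · by_contra hn
        exact main x w y hx hw hne h hn
    · push Not at hex
      exact ⟨fun y => G.Adj u y, fun y h => h, fun x hx => Or.inl (hex x hx)⟩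
  let τ : V → Fin 5 := fun x =>
    if G.Adj u x then (if R x then 2 else 3)
    else if S x then (if ∀ y, G.Adj x y ↔ G.Adj u y then 0 else 1) else 4
  refine ⟨fun i => Fintype.card {x // τ x = i}, τ, ?_, fun i => rfl⟩
  have hτS : ∀ x y, S x → ¬ S y → (G.Adj x y ↔ chainAdj (τ x) (τ y) = true) := by
    intro x y hx hy
    have hux : ¬ G.Adj u x := fun h => hSu x h hx
    by_cases huy : G.Adj u y
    · by_cases hall : ∀ y, G.Adj x y ↔ G.Adj u y
      · have : G.Adj x y := (hall y).2 huy
        by_cases hRy : R y <;> simp [τ, hux, huy, hx, hRy, hall, chainAdj]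
      · have := ((hR x hx).resolve_left hall) y
        by_cases hRy : R y <;> simp [τ, hux, huy, hx, hRy, hall, chainAdj, this]
    · have h1 : ¬ G.Adj x y := fun h => huy (hsub x hx y h)
      have h2 : τ y = 4 := by simp [τ, huy, hy]
      have key : ∀ i, chainAdj i 4 = false := by decide
      simp [h1, h2, key]
  have hsymm : ∀ i j, chainAdj i j = chainAdj j i := by decide
  intro x y
  by_cases hx : S x
  · by_cases hy : S y
    · have hux : ¬ G.Adj u x := fun h => hSu x h hx
      have huy : ¬ G.Adj u y := fun h => hSu y h hy
      have h1 : ¬ G.Adj x y := fun h => hSS x y h hx hy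
      have hτx : τ x = 0 ∨ τ x = 1 := by
        simp only [τ, if_neg hux, if_pos hx]; split_ifs <;> simp
      have hτy : τ y = 0 ∨ τ y = 1 := by
        simp only [τ, if_neg huy, if_pos hy]; split_ifs <;> simp
      rcases hτx with e | e <;> rcases hτy with e' | e' <;> simp [e, e', h1, chainAdj]
    · exact hτS x y hx hy
  · by_cases hy : S y
    · rw [G.adj_comm, hsymm]; exact hτS y x hy hx
    · have h1 : ¬ G.Adj x y := fun h => (hSor x y h).elim hx hy
      have hτ : ∀ z, ¬ S z → τ z = 2 ∨ τ z = 3 ∨ τ z = 4 := by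
        intro z hz
        simp only [τ, if_neg hz]; split_ifs <;> simp
      rcases hτ x hx with e | e | e <;> rcases hτ y hy with e' | e' | e' <;>
        simp [e, e', h1, chainAdj]

/-! ### Traces, and the chain types of the graphs in the classification -/

/-- The adjacency pattern `chainAdj` as a real matrix. -/
def chainMat : Matrix (Fin 5) (Fin 5) ℝ := Matrix.of fun i j => if chainAdj i j then 1 else 0

open Matrix in
/-- The factor `P` is the incidence matrix of vertices and vertex classes. -/
theorem ChainType.exists_factor {V : Type} [Fintype V] {G : SimpleGraph V} [DecidableRel G.Adj]
    {c : Fin 5 → ℕ} (hG : ChainType G c) :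
    ∃ P : Matrix V (Fin 5) ℝ, Pᵀ * P = diagonal (fun i => (c i : ℝ)) ∧
      G.adjMatrix ℝ = P * chainMat * Pᵀ := by
  obtain ⟨τ, hτ, cτ⟩ := hG
  refine ⟨of fun x i => if τ x = i then 1 else 0, ?_, ?_⟩
  · ext i j
    rw [Matrix.mul_apply, diagonal_apply]
    by_cases hij : i = j
    · subst hij
      rw [if_pos rfl, ← cτ, Fintype.card_subtype, Finset.card_filter, Nat.cast_sum]
      refine Finset.sum_congr rfl fun x _ => ?_
      by_cases h : τ x = i <;> simp [h]
    · rw [if_neg hij]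
      refine Finset.sum_eq_zero fun x _ => ?_
      by_cases h : τ x = i
      · simp [h, hij]
      · simp [h]
  · ext x y
    simp only [Matrix.mul_apply, adjMatrix_apply, hτ, chainMat, of_apply, transpose_apply]
    rw [Finset.sum_eq_single (τ y) (fun i _ hi => by simp [hi.symm]) (by simp),
      Finset.sum_eq_single (τ x) (fun i _ hi => by simp [hi.symm]) (by simp)]
    simp

open Matrix in
theorem ChainType.trace_sq {V : Type} [Fintype V] {G : SimpleGraph V} [DecidableRel G.Adj]
    {c : Fin 5 → ℕ} (hG : ChainType G c) :
    (G.adjMatrix ℝ * G.adjMatrix ℝ).trace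
      = 2 * ((c 0 : ℝ) * c 2 + c 0 * c 3 + c 1 * c 2) := by
  obtain ⟨P, hP, hA⟩ := hG.exists_factor
  have : G.adjMatrix ℝ * G.adjMatrix ℝ = P * (chainMat * (Pᵀ * P) * chainMat * Pᵀ) := by
    rw [hA]; simp only [Matrix.mul_assoc]
  rw [this, trace_mul_comm, Matrix.mul_assoc, hP]
  simp [trace, Matrix.mul_apply, chainMat, chainAdj, Fin.sum_univ_five, diagonal_apply]
  ring

open Matrix in
theorem ChainType.trace_pow_four {V : Type} [Fintype V] {G : SimpleGraph V} [DecidableRel G.Adj]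
    {c : Fin 5 → ℕ} (hG : ChainType G c) :
    ((G.adjMatrix ℝ * G.adjMatrix ℝ) * (G.adjMatrix ℝ * G.adjMatrix ℝ)).trace
      = 2 * (((c 0 : ℝ) * c 2 + c 0 * c 3 + c 1 * c 2) ^ 2 - 2 * (c 0 * c 1 * c 2 * c 3)) := by
  obtain ⟨P, hP, hA⟩ := hG.exists_factor
  have : (G.adjMatrix ℝ * G.adjMatrix ℝ) * (G.adjMatrix ℝ * G.adjMatrix ℝ)
      = P * (chainMat * (Pᵀ * P) * (chainMat * (Pᵀ * P)) * (chainMat * (Pᵀ * P)) *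
        chainMat * Pᵀ) := by
    rw [hA]; simp only [Matrix.mul_assoc]
  rw [this, trace_mul_comm, Matrix.mul_assoc, hP]
  have hM : chainMat * diagonal (fun i => (c i : ℝ)) =
      !![0, 0, (c 2 : ℝ), c 3, 0; 0, 0, c 2, 0, 0; c 0, c 1, 0, 0, 0; c 0, 0, 0, 0, 0;
        0, 0, 0, 0, 0] := by
    ext i j
    fin_cases i <;> fin_cases j <;>
      simp [chainMat, chainAdj]
  rw [Matrix.mul_assoc _ chainMat, hM]
  simp [trace, Fin.sum_univ_five]
  ring

theorem chainType_doubleStar (n : ℕ) : ChainType (doubleStar 1 n) ![1, 1, 1, n, 0] := by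
  refine ⟨fun x => match x with
    | Sum.inl none => 2
    | Sum.inl (some _) => 1
    | Sum.inr none => 0
    | Sum.inr (some _) => 3, ?_, ?_⟩
  · rintro ((_ | x) | (_ | x)) ((_ | y) | (_ | y)) <;>
      simp [doubleStar, chainAdj, SimpleGraph.fromRel_adj, Fin.fin_one_eq_zero]
  · intro i
    rw [Fintype.card_subtype, Finset.card_filter]
    simp only [Fintype.sum_sum_type, Fintype.sum_option]
    fin_cases i <;> simp

theorem chainType_graphA (a t : ℕ) :
    ChainType (graphA a ⊕g (⊥ : SimpleGraph (Fin t))) ![1, 1, a, 2, t] := by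
  refine ⟨fun x => match x with
    | Sum.inl (Sum.inl (Sum.inl i)) => if i = 0 then 0 else 1
    | Sum.inl (Sum.inl (Sum.inr _)) => 2
    | Sum.inl (Sum.inr _) => 3
    | Sum.inr _ => 4, ?_, ?_⟩
  · rintro (((x | x) | x) | x) (((y | y) | y) | y) <;>
      simp [graphA, SimpleGraph.fromRel_adj] <;> (try fin_cases x) <;> (try fin_cases y) <;>
      simp [chainAdj]
  · intro i
    rw [Fintype.card_subtype, Finset.card_filter]
    simp only [Fintype.sum_sum_type, Fin.sum_univ_two]
    fin_cases i <;> simp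

theorem chainType_graphB (a t : ℕ) :
    ChainType (graphB a ⊕g (⊥ : SimpleGraph (Fin t))) ![a, 1, 2, 2, t] := by
  refine ⟨fun x => match x with
    | Sum.inl (Sum.inl (Sum.inl i)) => if i.val < 2 then 2 else 3
    | Sum.inl (Sum.inl (Sum.inr _)) => 0
    | Sum.inl (Sum.inr _) => 1
    | Sum.inr _ => 4, ?_, ?_⟩
  · rintro (((x | x) | x) | x) (((y | y) | y) | y) <;>
      simp [graphB, SimpleGraph.fromRel_adj] <;> (try split_ifs) <;> simp_all [chainAdj]
  · intro i
    rw [Fintype.card_subtype, Finset.card_filter]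
    simp only [Fintype.sum_sum_type, Fin.sum_univ_four]
    fin_cases i <;> simp

open Matrix in
/-- The hyperplane is `x_w + ε n x_v = 0`, where `v`, `w` are the centers with `n` leaves and with
one leaf. On it `x ⬝ x - ε x ⬝ A x` equals `(n + 1) x_v ^ 2` plus one square
`(x_j - ε x_c) ^ 2` for each leaf `j`, with `c` its center. -/
theorem secondLtOne_doubleStar (n : ℕ) [DecidableRel (doubleStar 1 n).Adj] (ε : ℝ)
    (hε : ε * ε = 1) : SecondLtOne (ε • (doubleStar 1 n).adjMatrix ℝ) := by
  refine ⟨Sum.elim (fun i => if i = none then 1 else 0)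
    (fun i => if i = none then ε * n else 0), fun x hx hv => ?_⟩
  set w := x (Sum.inl none) with hw
  set l := x (Sum.inl (some 0)) with hl
  set v := x (Sum.inr none) with hvv
  set j : Fin n → ℝ := fun i => x (Sum.inr (some i)) with hj
  have hcon : w + ε * n * v = 0 := by
    simpa [dotProduct, Fintype.sum_sum_type, Fintype.sum_option] using hv
  have hquad : x ⬝ᵥ ((ε • (doubleStar 1 n).adjMatrix ℝ) *ᵥ x)
      = 2 * ε * (w * v + w * l + v * ∑ i, j i) := by
    rw [smul_mulVec, dotProduct_smul, smul_eq_mul]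
    simp only [dotProduct, mulVec, Fintype.sum_sum_type, Fintype.sum_option, adjMatrix_apply]
    simp [doubleStar, ← hw, ← hl, ← hvv]
    rw [← Finset.sum_mul]
    ring
  have hnorm : x ⬝ᵥ x = w ^ 2 + l ^ 2 + v ^ 2 + ∑ i, j i ^ 2 := by
    simp [dotProduct, Fintype.sum_sum_type, Fintype.sum_option, ← hw, ← hl, ← hvv, hj, sq]
    ring
  have hsq : ∑ i, (j i - ε * v) ^ 2 = ∑ i, j i ^ 2 - 2 * ε * v * ∑ i, j i + n * v ^ 2 := by
    rw [Finset.mul_sum, ← Finset.sum_sub_distrib]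
    have : (n : ℝ) * v ^ 2 = ∑ _i : Fin n, v ^ 2 := by simp
    rw [this, ← Finset.sum_add_distrib]
    refine Finset.sum_congr rfl fun i _ => ?_
    linear_combination (v ^ 2) * hε
  have hdiff : x ⬝ᵥ x - x ⬝ᵥ ((ε • (doubleStar 1 n).adjMatrix ℝ) *ᵥ x)
      = ∑ i, (j i - ε * v) ^ 2 + (l - ε * w) ^ 2 + (n + 1) * v ^ 2 := by
    rw [hquad, hnorm, hsq]
    linear_combination (-2 * ε * v) * hcon + (2 * n * v ^ 2 - w ^ 2) * hε
  have h1 : 0 ≤ ∑ i, (j i - ε * v) ^ 2 := Finset.sum_nonneg fun i _ => sq_nonneg _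
  have h2 : 0 ≤ (l - ε * w) ^ 2 := sq_nonneg _
  have h3 : 0 ≤ ((n : ℝ) + 1) * v ^ 2 := by positivity
  by_contra hlt
  have hv0 : v = 0 := by
    have : ((n : ℝ) + 1) * v ^ 2 = 0 := by linarith
    rcases mul_eq_zero.1 this with h | h
    · exact absurd h (by positivity)
    · exact pow_eq_zero_iff two_ne_zero |>.1 h
  have hw0 : w = 0 := by simpa [hv0] using hcon
  have hl0 : l = 0 := by
    have : (l - ε * w) ^ 2 = 0 := by linarith
    simpa [hw0] using this
  have hj0 : ∀ i, j i = 0 := by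
    have : ∑ i, (j i - ε * v) ^ 2 = 0 := by linarith
    rw [Finset.sum_eq_zero_iff_of_nonneg fun i _ => sq_nonneg _] at this
    intro i
    simpa [hv0] using this i (Finset.mem_univ i)
  apply hx
  ext ((_ | i) | (_ | i))
  · exact hw0
  · rw [Subsingleton.elim i 0]; exact hl0
  · exact hv0
  · exact hj0 i

/-! ### The equations for the class sizes -/

/-- The case of a single vertex in class `1` of the equations of `solve_sizes`. -/
theorem solve_of_q_eq_one {p r s n : ℕ} (hn : 3 ≤ n) (h1 : p * r + p * s + r = n + 2)
    (h2 : p * r * s = n) :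
    (p = 1 ∧ r = 1 ∧ s = n) ∨ (p = 1 ∧ s = 2 ∧ 2 * r = n) ∨ (s = 2 ∧ r = 2 ∧ 4 * p = n) := by
  have hp : p ≠ 0 := by rintro rfl; simp at h2; omega
  have hr : r ≠ 0 := by rintro rfl; simp at h2; omega
  have hs : s ≠ 0 := by rintro rfl; simp at h2; omega
  rw [← h2] at h1
  obtain ⟨p, rfl⟩ := Nat.exists_eq_add_of_le' (Nat.one_le_iff_ne_zero.2 hp)
  obtain ⟨r, rfl⟩ := Nat.exists_eq_add_of_le' (Nat.one_le_iff_ne_zero.2 hr)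
  obtain ⟨s, rfl⟩ := Nat.exists_eq_add_of_le' (Nat.one_le_iff_ne_zero.2 hs)
  rcases p with _ | p
  · have h : r * s = r := by zify at h1 ⊢; linarith
    rcases r with _ | r
    · left; refine ⟨rfl, rfl, by rw [← h2]; ring⟩
    · right; left
      have : s = 1 := by
        have := Nat.eq_of_mul_eq_mul_left (Nat.succ_pos r) (h.trans (mul_one _).symm)
        exact this
      subst this
      exact ⟨rfl, rfl, by rw [← h2]; ring⟩
  · rcases s with _ | _ | s
    · exfalso
      nlinarith
    · have h : (p + 1) * r = p + 1 := by zify at h1 ⊢; linarith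
      have : r = 1 := Nat.eq_of_mul_eq_mul_left (Nat.succ_pos p) (h.trans (mul_one _).symm)
      subst this
      right; right
      exact ⟨rfl, rfl, by rw [← h2]; ring⟩
    · exfalso
      rcases r with _ | r
      · nlinarith
      · have : 0 < ((p : ℤ) + 2) * (r + 2) * (s + 3) + 2 -
            ((p + 2) * (r + 2) + (p + 2) * (s + 3) + (r + 2)) := by
          ring_nf; positivity
        zify at h1
        linarith

/-- The possible class sizes `p, q, r, s`, given the number `pr + ps + qr` of edges and the product
`pqrs`, which is a coefficient of the characteristic polynomial. The two families of solutions are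
interchanged by exchanging the sides of the bipartition. -/
theorem solve_sizes {p q r s n : ℕ} (hn : 3 ≤ n) (h1 : p * r + p * s + q * r = n + 2)
    (h2 : p * q * r * s = n) :
    (q = 1 ∧ ((p = 1 ∧ r = 1 ∧ s = n) ∨ (p = 1 ∧ s = 2 ∧ 2 * r = n) ∨
      (s = 2 ∧ r = 2 ∧ 4 * p = n))) ∨
    (s = 1 ∧ ((r = 1 ∧ p = 1 ∧ q = n) ∨ (r = 1 ∧ q = 2 ∧ 2 * p = n) ∨
      (q = 2 ∧ p = 2 ∧ 4 * r = n))) := by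
  have hp : p ≠ 0 := by rintro rfl; simp at h2; omega
  have hq : q ≠ 0 := by rintro rfl; simp at h2; omega
  have hr : r ≠ 0 := by rintro rfl; simp at h2; omega
  have hs : s ≠ 0 := by rintro rfl; simp at h2; omega
  by_cases hq1 : q = 1
  · subst hq1
    exact Or.inl ⟨rfl, solve_of_q_eq_one hn (by simpa using h1) (by simpa using h2)⟩
  by_cases hs1 : s = 1
  · subst hs1
    exact Or.inr ⟨rfl, solve_of_q_eq_one hn (by linarith) (by rw [← h2]; ring)⟩
  exfalso
  obtain ⟨p, rfl⟩ := Nat.exists_eq_add_of_le' (Nat.one_le_iff_ne_zero.2 hp)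
  obtain ⟨r, rfl⟩ := Nat.exists_eq_add_of_le' (Nat.one_le_iff_ne_zero.2 hr)
  obtain ⟨q, rfl⟩ := Nat.exists_eq_add_of_le' (show 2 ≤ q by omega)
  obtain ⟨s, rfl⟩ := Nat.exists_eq_add_of_le' (show 2 ≤ s by omega)
  have : 0 < ((p : ℤ) + 1) * (q + 2) * (r + 1) * (s + 2) + 2 -
      ((p + 1) * (r + 1) + (p + 1) * (s + 2) + (q + 2) * (r + 1)) := by
    ring_nf; positivity
  rw [← h2] at h1
  zify at h1
  linarith

/-! ### Graphs cospectral to the double star -/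

theorem ChainType.sum_sizes {V : Type} [Fintype V] {G : SimpleGraph V} {c : Fin 5 → ℕ}
    (hG : ChainType G c) : ∑ i, c i = Fintype.card V := by
  obtain ⟨τ, -, cτ⟩ := hG
  rw [← Fintype.card_congr (Equiv.sigmaFiberEquiv τ), Fintype.card_sigma]
  exact Finset.sum_congr rfl fun i _ => (cτ i).symm

open Matrix in
theorem SecondLtOne.submatrix {V : Type} [Fintype V] [DecidableEq V] {A : Matrix V V ℝ}
    (hA : SecondLtOne A) {k : ℕ} (φ : Fin k → V) (hφ : Function.Injective φ) :
    SecondLtOne (A.submatrix φ φ) := by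
  rw [← incl_compress]
  exact hA.compress _ (incl_isometry φ hφ)

open Matrix in
theorem no_triangle {V : Type} [Fintype V] [DecidableEq V] (G : SimpleGraph V)
    [DecidableRel G.Adj] (hneg : SecondLtOne (-G.adjMatrix ℝ)) :
    ∀ a b c, G.Adj a b → G.Adj b c → G.Adj c a → False := by
  intro a b c h1 h2 h3
  have hinj : Function.Injective ![a, b, c] := by
    intro i j hij
    fin_cases i <;> fin_cases j <;> simp_all
  refine not_secondLtOne_neg_triangle ?_
  convert hneg.submatrix _ hinj using 1
  ext i j
  fin_cases i <;> fin_cases j <;> simp [h1, h2, h3, h1.symm, h2.symm, h3.symm]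

open Matrix in
theorem no_twoEdges {V : Type} [Fintype V] [DecidableEq V] (G : SimpleGraph V)
    [DecidableRel G.Adj] (hpos : SecondLtOne (G.adjMatrix ℝ)) :
    ∀ a b c d, G.Adj a b → G.Adj c d → ¬ G.Adj a c → ¬ G.Adj a d → ¬ G.Adj b c →
    ¬ G.Adj b d → False := by
  intro a b c d h1 h2 h3 h4 h5 h6
  have hac : a ≠ c := by rintro rfl; exact h4 h2
  have had : a ≠ d := by rintro rfl; exact h3 h2.symm
  have hbc : b ≠ c := by rintro rfl; exact h3 h1
  have hbd : b ≠ d := by rintro rfl; exact h4 h1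
  have hinj : Function.Injective ![a, b, c, d] := by
    intro i j hij
    have := h1.ne
    have := h2.ne
    fin_cases i <;> fin_cases j <;> simp_all
  refine not_secondLtOne_twoEdges ?_
  convert hpos.submatrix _ hinj using 1
  ext i j
  fin_cases i <;> fin_cases j <;>
    simp [h1, h2, h3, h4, h5, h6, h1.symm, h2.symm, G.adj_comm c a, G.adj_comm c b,
      G.adj_comm d a, G.adj_comm d b]

open Matrix in
/-- A closed 5-walk in a triangle-free graph runs around an induced 5-cycle. -/
theorem no_pentagon {V : Type} [Fintype V] [DecidableEq V] (G : SimpleGraph V)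
    [DecidableRel G.Adj] (hneg : SecondLtOne (-G.adjMatrix ℝ))
    (tri : ∀ a b c, G.Adj a b → G.Adj b c → G.Adj c a → False) :
    ∀ a b c d e, G.Adj a b → G.Adj b c → G.Adj c d → G.Adj d e → G.Adj e a →
    False := by
  intro a b c d e h1 h2 h3 h4 h5
  have nac : ¬ G.Adj a c := fun h => tri a b c h1 h2 h.symm
  have nbd : ¬ G.Adj b d := fun h => tri b c d h2 h3 h.symm
  have nce : ¬ G.Adj c e := fun h => tri c d e h3 h4 h.symm
  have nda : ¬ G.Adj d a := fun h => tri d e a h4 h5 h.symm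
  have neb : ¬ G.Adj e b := fun h => tri e a b h5 h1 h.symm
  have hac : a ≠ c := by rintro rfl; exact nda h3.symm
  have hbd : b ≠ d := by rintro rfl; exact neb h4.symm
  have hce : c ≠ e := by rintro rfl; exact nac h5.symm
  have hda : d ≠ a := by rintro rfl; exact nbd h1.symm
  have heb : e ≠ b := by rintro rfl; exact nce h2.symm
  have hinj : Function.Injective ![a, b, c, d, e] := by
    intro i j hij
    have := h1.ne
    have := h2.ne
    have := h3.ne
    have := h4.ne
    have := h5.ne
    fin_cases i <;> fin_cases j <;> simp_all
  refine not_secondLtOne_neg_pentagon ?_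
  convert hneg.submatrix _ hinj using 1
  ext i j
  fin_cases i <;> fin_cases j <;>
    simp [h1, h2, h3, h4, h5, h1.symm, h2.symm, h3.symm, h4.symm, h5.symm, nac, nbd, nce, nda,
      neb, G.adj_comm c a, G.adj_comm d b, G.adj_comm e c, G.adj_comm a d, G.adj_comm b e]

open Matrix in
theorem no_halfGraph {V : Type} [Fintype V] [DecidableEq V] (G : SimpleGraph V)
    [DecidableRel G.Adj] (hrank : (G.adjMatrix ℝ).rank ≤ 5)
    (tri : ∀ a b c, G.Adj a b → G.Adj b c → G.Adj c a → False) :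
    ∀ x₁ x₂ x₃ y₁ y₂ y₃, G.Adj x₁ y₁ → ¬ G.Adj x₁ y₂ → ¬ G.Adj x₁ y₃ →
    G.Adj x₂ y₁ → G.Adj x₂ y₂ → ¬ G.Adj x₂ y₃ →
    G.Adj x₃ y₁ → G.Adj x₃ y₂ → G.Adj x₃ y₃ → False := by
  intro x₁ x₂ x₃ y₁ y₂ y₃ h11 h12 h13 h21 h22 h23 h31 h32 h33
  have a12 : ¬ G.Adj x₁ x₂ := fun h => tri _ _ _ h h21 h11.symm
  have a13 : ¬ G.Adj x₁ x₃ := fun h => tri _ _ _ h h31 h11.symm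
  have a23 : ¬ G.Adj x₂ x₃ := fun h => tri _ _ _ h h31 h21.symm
  have b12 : ¬ G.Adj y₁ y₂ := fun h => tri _ _ _ h h32.symm h31
  have b13 : ¬ G.Adj y₁ y₃ := fun h => tri _ _ _ h h33.symm h31
  have b23 : ¬ G.Adj y₂ y₃ := fun h => tri _ _ _ h h33.symm h32
  have hsub : (G.adjMatrix ℝ).submatrix ![x₁, x₂, x₃, y₁, y₂, y₃] ![x₁, x₂, x₃, y₁, y₂, y₃]
      = !![0, 0, 0, 1, 0, 0; 0, 0, 0, 1, 1, 0; 0, 0, 0, 1, 1, 1;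
        1, 1, 1, 0, 0, 0; 0, 1, 1, 0, 0, 0; 0, 0, 1, 0, 0, (0 : ℝ)] := by
    ext i j
    fin_cases i <;> fin_cases j <;>
      simp [h11, h12, h13, h21, h22, h23, h31, h32, h33, a12, a13, a23, b12, b13, b23,
        G.adj_comm x₂ x₁, G.adj_comm x₃ x₁, G.adj_comm x₃ x₂, G.adj_comm y₂ y₁,
        G.adj_comm y₃ y₁, G.adj_comm y₃ y₂, G.adj_comm y₁ x₁, G.adj_comm y₁ x₂,
        G.adj_comm y₁ x₃, G.adj_comm y₂ x₁, G.adj_comm y₂ x₂, G.adj_comm y₂ x₃,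
        G.adj_comm y₃ x₁, G.adj_comm y₃ x₂, G.adj_comm y₃ x₃]
  have h6 := rank_halfGraph
  rw [← hsub, ← incl_compress, Matrix.mul_assoc] at h6
  have := (rank_mul_le_right (incl ![x₁, x₂, x₃, y₁, y₂, y₃])ᵀ
    (G.adjMatrix ℝ * incl ![x₁, x₂, x₃, y₁, y₂, y₃])).trans (rank_mul_le_left _ _)
  omega

open Matrix in
/-- A graph cospectral to `P₂(1,n)` is a two-step chain graph, and the sizes of its
classes satisfy the equations given by its order and the traces of `A²` and `A⁴`. -/
theorem chainType_of_cospectral (n : ℕ) {V : Type} [Fintype V] [DecidableEq V]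
    (G : SimpleGraph V) (h : Cospectral (doubleStar 1 n) G) :
    ∃ p q r s t, ChainType G ![p, q, r, s, t] ∧ p * r + p * s + q * r = n + 2 ∧
      p * q * r * s = n ∧ p + q + r + s + t = n + 3 := by
  classical
  let _ := Classical.decRel G.Adj
  let _ := Classical.decRel (doubleStar 1 n).Adj
  have hch : ((doubleStar 1 n).adjMatrix ℝ).charpoly = (G.adjMatrix ℝ).charpoly := h
  have hcard : Fintype.card V = n + 3 := by
    rw [← (G.adjMatrix ℝ).charpoly_natDegree_eq_dim, ← hch, charpoly_natDegree_eq_dim]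
    simp; ring
  obtain ⟨U, hU1, hU2, hA⟩ := exists_orthogonal_of_charpoly_eq (G.adjMatrix ℝ)
    ((doubleStar 1 n).adjMatrix ℝ) (G.isSymm_adjMatrix) (isSymm_adjMatrix _) hch
  set B := (doubleStar 1 n).adjMatrix ℝ with hB
  have hD := chainType_doubleStar n
  have hAA : G.adjMatrix ℝ * G.adjMatrix ℝ = U * (B * B) * Uᵀ := by
    calc G.adjMatrix ℝ * G.adjMatrix ℝ = U * B * (Uᵀ * U) * B * Uᵀ := by
          rw [hA]; simp only [Matrix.mul_assoc]
      _ = _ := by rw [hU1]; simp only [Matrix.mul_assoc, Matrix.one_mul]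
  have htr2 : (G.adjMatrix ℝ * G.adjMatrix ℝ).trace = (B * B).trace := by
    rw [hAA, trace_mul_comm, ← Matrix.mul_assoc, hU1, Matrix.one_mul]
  have htr4 : (G.adjMatrix ℝ * G.adjMatrix ℝ * (G.adjMatrix ℝ * G.adjMatrix ℝ)).trace
      = (B * B * (B * B)).trace := by
    have : G.adjMatrix ℝ * G.adjMatrix ℝ * (G.adjMatrix ℝ * G.adjMatrix ℝ)
        = U * (B * B * (B * B)) * Uᵀ := by
      calc _ = U * (B * B) * (Uᵀ * U) * (B * B) * Uᵀ := by
            rw [hAA]; simp only [Matrix.mul_assoc]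
        _ = _ := by rw [hU1]; simp only [Matrix.mul_assoc, Matrix.one_mul]
    rw [this, trace_mul_comm, ← Matrix.mul_assoc, hU1, Matrix.one_mul]
  rw [hD.trace_sq] at htr2
  rw [hD.trace_pow_four] at htr4
  have hS : ∀ ε : ℝ, ε * ε = 1 → SecondLtOne (ε • G.adjMatrix ℝ) := by
    intro ε hε
    have h1 := (secondLtOne_doubleStar n ε hε).compress Uᵀ (by rw [transpose_transpose, hU2])
    have h2 : Uᵀᵀ * (ε • (doubleStar 1 n).adjMatrix ℝ) * Uᵀ = ε • G.adjMatrix ℝ := by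
      rw [hA, transpose_transpose, Matrix.mul_smul, Matrix.smul_mul]
    rwa [h2] at h1
  have hpos : SecondLtOne (G.adjMatrix ℝ) := by simpa using hS 1 (by norm_num)
  have hneg : SecondLtOne (-G.adjMatrix ℝ) := by simpa using hS (-1) (by norm_num)
  have hrank : (G.adjMatrix ℝ).rank ≤ 5 := by
    obtain ⟨P, -, hP⟩ := hD.exists_factor
    have : G.adjMatrix ℝ = (U * P) * (chainMat * Pᵀ * Uᵀ) := by
      rw [hA, hB, hP]; simp only [Matrix.mul_assoc]
    rw [this]
    exact (rank_mul_le_left _ _).trans ((rank_le_card_width _).trans (by simp))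
  have tri := no_triangle G hneg
  have hedge : ∃ a b, G.Adj a b := by
    by_contra hcon
    push Not at hcon
    have h0 : G.adjMatrix ℝ = 0 := by
      ext a b
      simp [hcon a b]
    rw [h0] at htr2
    simp at htr2
    have : (0 : ℝ) ≤ n := Nat.cast_nonneg n
    linarith
  obtain ⟨c, hc⟩ := exists_chainType G hedge (no_pentagon G hneg tri)
    (no_twoEdges G hpos) (no_halfGraph G hrank tri)
  have hsum := hc.sum_sizes
  rw [hc.trace_sq] at htr2
  rw [hc.trace_pow_four] at htr4
  have hcv : c = ![c 0, c 1, c 2, c 3, c 4] := by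
    ext i; fin_cases i <;> rfl
  simp at htr2 htr4
  have e1 : (c 0 : ℝ) * c 2 + c 0 * c 3 + c 1 * c 2 = n + 2 := by linarith
  have e2 : (c 0 : ℝ) * c 1 * c 2 * c 3 = n := by
    rw [e1] at htr4
    linarith
  refine ⟨c 0, c 1, c 2, c 3, c 4, hcv ▸ hc, by exact_mod_cast e1, by exact_mod_cast e2, ?_⟩
  rw [hcard, Fin.sum_univ_five] at hsum
  exact hsum

/-- if `n ≥ 3` and `G` is cospectral to `P₂(1,n)`, then exactly one of the
following holds (where cases (2) and (3) coincide when `n = 4`):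
(1) `G ≅ P₂(1,n)`; (2) `n` is even, `n/2 ≥ 2`, and `G ≅ A_{n/2} + (n/2 - 1)K₁`;
(3) `4 ∣ n` and `G ≅ B_{n/4} + (3n/4 - 2)K₁`. -/
theorem cospectral_doubleStar_classification (n : ℕ) (hn : 3 ≤ n)
    {V : Type} [Fintype V] [DecidableEq V] (G : SimpleGraph V)
    (h : Cospectral (doubleStar 1 n) G) :
    let case1 := Nonempty (G ≃g doubleStar 1 n)
    let case2 := Even n ∧ 2 ≤ n / 2 ∧
      Nonempty (G ≃g (graphA (n / 2) ⊕g (⊥ : SimpleGraph (Fin (n / 2 - 1)))))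
    let case3 := 4 ∣ n ∧
      Nonempty (G ≃g (graphB (n / 4) ⊕g (⊥ : SimpleGraph (Fin (3 * (n / 4) - 2)))))
    (case1 ∨ case2 ∨ case3) ∧
    (case1 → ¬ case2 ∧ ¬ case3) ∧
    (n ≠ 4 → ¬ (case2 ∧ case3)) := by
  intro case1 case2 case3
  have hD := chainType_doubleStar n
  refine ⟨?_, ?_, ?_⟩
  · obtain ⟨p, q, r, s, t, hG, h1, h2, h3⟩ := chainType_of_cospectral n G h
    have main : ∀ p r s, ChainType G ![p, 1, r, s, t] → p + 1 + r + s + t = n + 3 →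
        ((p = 1 ∧ r = 1 ∧ s = n) ∨ (p = 1 ∧ s = 2 ∧ 2 * r = n) ∨
          (s = 2 ∧ r = 2 ∧ 4 * p = n)) → case1 ∨ case2 ∨ case3 := by
      rintro p r s hG h3 (⟨rfl, rfl, rfl⟩ | ⟨rfl, rfl, hr⟩ | ⟨rfl, rfl, hp⟩)
      · obtain rfl : t = 0 := by omega
        exact Or.inl (hG.iso hD)
      · obtain rfl : r = n / 2 := by omega
        obtain rfl : t = n / 2 - 1 := by omega
        exact Or.inr (Or.inl ⟨⟨n / 2, by omega⟩, by omega, hG.iso (chainType_graphA _ _)⟩)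
      · obtain rfl : p = n / 4 := by omega
        obtain rfl : t = 3 * (n / 4) - 2 := by omega
        exact Or.inr (Or.inr ⟨⟨n / 4, hp.symm⟩, hG.iso (chainType_graphB _ _)⟩)
    rcases solve_sizes hn h1 h2 with ⟨rfl, hs⟩ | ⟨rfl, hs⟩
    · exact main p r s hG h3 hs
    · exact main r p q hG.swap (by omega) hs
  · -- The numbers of isolated vertices differ: none in `P₂(1,n)`, at least one in the others.
    rintro ⟨f⟩
    have i1 := (hD.of_iso f).card_isolated (by simp) (by simp)
    refine ⟨?_, ?_⟩
    · rintro ⟨-, h2, ⟨g⟩⟩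
      have i2 := ((chainType_graphA _ _).of_iso g).card_isolated (by simp) (by simp; omega)
      rw [i1] at i2
      simp at i2
      omega
    · rintro ⟨h4, ⟨g⟩⟩
      have i2 := ((chainType_graphB _ _).of_iso g).card_isolated (by simp; omega) (by simp)
      rw [i1] at i2
      simp at i2
      omega
  · rintro hn4 ⟨⟨-, h2, ⟨f⟩⟩, h4, ⟨g⟩⟩
    have i1 := ((chainType_graphA _ _).of_iso f).card_isolated (by simp) (by simp; omega)
    have i2 := ((chainType_graphB _ _).of_iso g).card_isolated (by simp; omega) (by simp)
    rw [i1] at i2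
    simp at i2
    omega
end

section
/- For every integer n ≥ 1, if there exists a finite simple graph that is cospectral to the double star P_2(1,n) but not isomorphic to P_2(1,n), then n is even. Equivalently, for every odd integer n ≥ 1, every graph cospectral to P_2(1,n) is isomorphic to P_2(1,n). -/
/-!
The nonzero eigenvalues of `P₂(1,n)` are the four roots of `x⁴ - (n+2)x² + n`. A cospectral graph
`G` therefore has `n + 3` vertices, adjacency matrix of rank at most `4`, no closed walks of odd
length, and the same values of `tr A²` and `tr A⁴`. The second and third conditions make `G`
bipartite with a `0/1` biadjacency matrix `B` of rank at most `2`.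

Such a matrix has very few row and column types (`exists_blowup`): fixing a `2 × 2` minor of
determinant `1`, every entry is determined by its row's entries in two columns and its column's
entries in two rows, and the requirement that the result be `0` or `1` leaves only blow-ups of the
path on five vertices, with isolated vertices added. Here classes may be empty, which covers
blow-ups of shorter paths and disjoint unions of two complete bipartite graphs.

If the consecutive classes have sizes `a, b, c, d, e`, the traces give
`ab + bc + cd + de = n + 2` and `bd(ac + ce + ae) = n`. For odd `n` the only solutions
(`arith_five`) are four consecutive classes of sizes `1, 1, 1, n` in one of the two orders; the
vertex count then excludes isolated vertices, so `G` is `P₂(1,n)` itself.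
-/

open Polynomial SimpleGraph

/-! ### Spectral invariants read off the characteristic polynomial -/

theorem rank_eq_card_roots {V : Type} [Fintype V] [DecidableEq V] {A : Matrix V V ℝ}
    (hA : A.IsHermitian) : A.rank = (A.charpoly.roots.filter (· ≠ 0)).card := by
  rw [hA.rank_eq_card_non_zero_eigs, hA.roots_charpoly_eq_eigenvalues, Multiset.filter_map,
    Multiset.card_map, Fintype.card_subtype]
  rfl

theorem trace_pow_eq_sum_roots {V : Type} [Fintype V] [DecidableEq V] {A : Matrix V V ℝ}
    (hA : A.IsHermitian) (k : ℕ) : (A ^ k).trace = (A.charpoly.roots.map (· ^ k)).sum := by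
  rw [hA.roots_charpoly_eq_eigenvalues, Multiset.map_map]
  conv_lhs => rw [hA.spectral_theorem, ← map_pow, Unitary.conjStarAlgAut_apply,
    Matrix.trace_mul_comm, ← mul_assoc]
  simp [Matrix.diagonal_pow, Matrix.trace_diagonal]

/-! ### Blow-ups of a path and their spectral moments -/

/-- Adjacency in the path `0 - 1 - 2 - 3 - 4` together with the isolated vertex `5`. -/
def pathAdj (i j : Fin 6) : Bool :=
  (i.val + 1 == j.val || j.val + 1 == i.val) && (i.val < 5 && j.val < 5)

/-- The adjacency matrix of the graph given by `pathAdj`. -/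
def pathMatrix : Matrix (Fin 6) (Fin 6) ℝ := Matrix.of fun i j => if pathAdj i j then 1 else 0

/-- `f : V → Fin 6` exhibits `G` as a blow-up of the path: vertices are replaced by independent
sets (the fibres of `f`, possibly empty) and edges by complete bipartite graphs. -/
def IsBlowup {V : Type} (G : SimpleGraph V) (f : V → Fin 6) : Prop :=
  ∀ x y, G.Adj x y ↔ pathAdj (f x) (f y) = true

/-- The size of the class of `f` over `i`. -/
def classSize {V : Type} [Fintype V] (f : V → Fin 6) (i : Fin 6) : ℕ :=
  Fintype.card {x // f x = i}

theorem classSize_eq_sum {V : Type} [Fintype V] (f : V → Fin 6) (i : Fin 6) :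
    classSize f i = ∑ x, if f x = i then 1 else 0 := by
  rw [classSize, Fintype.card_subtype, Finset.card_filter]

theorem sum_classSize {V : Type} [Fintype V] (f : V → Fin 6) :
    ∑ i, classSize f i = Fintype.card V := by
  simp_rw [classSize_eq_sum]
  rw [Finset.sum_comm]
  simp

theorem IsBlowup.adjMatrix_eq {V : Type} {G : SimpleGraph V} [DecidableRel G.Adj]
    {f : V → Fin 6} (h : IsBlowup G f) : G.adjMatrix ℝ = pathMatrix.submatrix f f := by
  ext x y
  simp [adjMatrix_apply, pathMatrix, h x y]

/-- Factorisation through the `V × 6` class incidence matrix and its transpose. -/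
theorem submatrix_factor {V : Type} [Fintype V] (f : V → Fin 6) (C : Matrix (Fin 6) (Fin 6) ℝ) :
    C.submatrix f f = (1 : Matrix (Fin 6) (Fin 6) ℝ).submatrix f id * C *
      (1 : Matrix (Fin 6) (Fin 6) ℝ).submatrix id f := by
  ext x y
  simp [Matrix.mul_apply, Matrix.one_apply]

theorem incidence_mul {V : Type} [Fintype V] (f : V → Fin 6) :
    (1 : Matrix (Fin 6) (Fin 6) ℝ).submatrix id f * (1 : Matrix (Fin 6) (Fin 6) ℝ).submatrix f id
      = Matrix.diagonal fun i => (classSize f i : ℝ) := by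
  simp_rw [classSize_eq_sum]
  ext i j
  by_cases hij : i = j
  · subst hij
    simp only [Matrix.mul_apply, Matrix.submatrix_apply, Matrix.one_apply, id,
      Matrix.diagonal_apply_eq, Nat.cast_sum]
    refine Finset.sum_congr rfl fun x _ => ?_
    by_cases hx : f x = i
    · simp [hx]
    · simp [hx, Ne.symm hx]
  · simp only [Matrix.mul_apply, Matrix.submatrix_apply, Matrix.one_apply, id, Matrix.diagonal_apply,
      hij, if_false]
    refine Finset.sum_eq_zero fun x _ => ?_
    by_cases h1 : i = f x
    · simp [← h1, hij]
    · simp [h1]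

/-- Closed walks in a blow-up are counted by the class-weighted quotient matrix. -/
theorem trace_submatrix_pow {V : Type} [Fintype V] [DecidableEq V] (f : V → Fin 6)
    (C : Matrix (Fin 6) (Fin 6) ℝ) (k : ℕ) :
    ((C.submatrix f f) ^ (k + 1)).trace =
      ((C * Matrix.diagonal fun i => (classSize f i : ℝ)) ^ (k + 1)).trace := by
  rw [← incidence_mul, submatrix_factor]
  set F := (1 : Matrix (Fin 6) (Fin 6) ℝ).submatrix f id
  set F' := (1 : Matrix (Fin 6) (Fin 6) ℝ).submatrix id f
  have key : ∀ k : ℕ, (F * C * F') ^ (k + 1) = F * (C * (F' * F)) ^ k * (C * F') := by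
    intro k
    induction k with
    | zero => simp [Matrix.mul_assoc]
    | succ k ih => rw [pow_succ, ih, pow_succ]; simp only [Matrix.mul_assoc]
  rw [key, Matrix.mul_assoc, Matrix.trace_mul_comm, pow_succ]
  simp only [Matrix.mul_assoc]

theorem trace_sq_blowup {V : Type} [Fintype V] [DecidableEq V] {G : SimpleGraph V}
    [DecidableRel G.Adj] {f : V → Fin 6} (h : IsBlowup G f) {a b c d e : ℕ}
    (ha : classSize f 0 = a) (hb : classSize f 1 = b) (hc : classSize f 2 = c)
    (hd : classSize f 3 = d) (he : classSize f 4 = e) :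
    ((G.adjMatrix ℝ) ^ 2).trace = 2 * (a * b + b * c + c * d + d * e : ℝ) := by
  subst ha hb hc hd he
  rw [h.adjMatrix_eq, trace_submatrix_pow, pow_two]
  simp [Matrix.trace, Matrix.mul_apply, pathMatrix, pathAdj, Fin.sum_univ_succ]
  ring

theorem trace_four_blowup {V : Type} [Fintype V] [DecidableEq V] {G : SimpleGraph V}
    [DecidableRel G.Adj] {f : V → Fin 6} (h : IsBlowup G f) {a b c d e : ℕ}
    (ha : classSize f 0 = a) (hb : classSize f 1 = b) (hc : classSize f 2 = c)
    (hd : classSize f 3 = d) (he : classSize f 4 = e) :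
    ((G.adjMatrix ℝ) ^ 4).trace = 2 * (a * b + b * c + c * d + d * e : ℝ) ^ 2
      - 4 * (b * d * (a * c + c * e + a * e)) := by
  subst ha hb hc hd he
  rw [h.adjMatrix_eq, trace_submatrix_pow, show 3 + 1 = 2 * 2 from rfl, pow_mul, pow_two, pow_two]
  simp [Matrix.trace, Matrix.mul_apply, pathMatrix, pathAdj, Fin.sum_univ_succ]
  ring

/-- Blow-ups of a path are bipartite, so they have no closed walks of odd length. -/
theorem trace_odd_blowup {V : Type} [Fintype V] [DecidableEq V] {G : SimpleGraph V}
    [DecidableRel G.Adj] {f : V → Fin 6} (h : IsBlowup G f) {k : ℕ} (hk : Odd k) :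
    ((G.adjMatrix ℝ) ^ k).trace = 0 := by
  -- Conjugating by the diagonal matrix of the signs of the bipartition negates `A`.
  set A := G.adjMatrix ℝ with hA
  let S : Matrix V V ℝ := Matrix.diagonal fun x => (-1) ^ (f x).val
  have hSS : S * S = 1 := by
    simp only [S, Matrix.diagonal_mul_diagonal, ← pow_add, ← two_mul, pow_mul]
    simp
  have hP : ∀ i j : Fin 6, pathAdj i j = true → Odd (i.val + j.val) := by decide
  have hneg : S * A * S = -A := by
    ext x y
    simp only [S, Matrix.mul_diagonal, Matrix.diagonal_mul, Matrix.neg_apply, hA, adjMatrix_apply]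
    by_cases hxy : G.Adj x y
    · have := hP _ _ ((h x y).1 hxy)
      simp [hxy, ← pow_add, this.neg_one_pow]
    · simp [hxy]
  have hpow : ∀ k : ℕ, (S * A * S) ^ k = S * A ^ k * S := by
    intro k
    induction k with
    | zero => simp [hSS]
    | succ k ih =>
      rw [pow_succ, ih, pow_succ]
      calc S * A ^ k * S * (S * A * S) = S * A ^ k * (S * S) * A * S := by
            simp only [Matrix.mul_assoc]
        _ = _ := by rw [hSS]; simp only [Matrix.mul_assoc, Matrix.one_mul]
  have h1 : ((S * A * S) ^ k).trace = (A ^ k).trace := by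
    rw [hpow, Matrix.trace_mul_comm, ← Matrix.mul_assoc, hSS, Matrix.one_mul]
  rw [hneg, hk.neg_pow, Matrix.trace_neg] at h1
  linarith

/-! ### Structure of graphs with the spectrum of a double star -/

/-- The trace of `A ^ k` counts closed walks of length `k`; without odd ones the graph is
bipartite. -/
theorem colorable_of_trace {V : Type} [Fintype V] [DecidableEq V] {G : SimpleGraph V}
    [DecidableRel G.Adj] (h : ∀ k, Odd k → ((G.adjMatrix ℝ) ^ k).trace = 0) :
    G.Colorable 2 := by
  rw [two_colorable_iff_forall_loop_even]
  intro u w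
  by_contra hw
  have h0 := h _ (Nat.not_even_iff_odd.1 hw)
  rw [Matrix.trace, Finset.sum_eq_zero_iff_of_nonneg] at h0
  · have := h0 u (Finset.mem_univ _)
    rw [Matrix.diag_apply, adjMatrix_pow_apply_eq_card_walk, Nat.cast_eq_zero,
      Fintype.card_eq_zero_iff] at this
    exact this.elim ⟨w, rfl⟩
  · intro x _
    rw [Matrix.diag_apply, adjMatrix_pow_apply_eq_card_walk]
    positivity

/-- The biadjacency matrix of a bipartite graph has half the rank of the adjacency matrix, so all
its `3 × 3` minors vanish once the rank of the adjacency matrix is at most `4`. -/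
theorem det_three_eq_zero {V : Type} [Fintype V] [DecidableEq V] {G : SimpleGraph V}
    [DecidableRel G.Adj] (col : V → Bool) (hcol : ∀ x y, G.Adj x y → col x ≠ col y)
    (hr : (G.adjMatrix ℝ).rank ≤ 4) (κ : Bool) (x y : Fin 3 → V) (hx : ∀ i, col (x i) = κ)
    (hy : ∀ i, col (y i) ≠ κ) : ((G.adjMatrix ℝ).submatrix x y).det = 0 := by
  set A := G.adjMatrix ℝ with hA
  have hblock : A.submatrix (Sum.elim x y) (Sum.elim y x) =
      Matrix.fromBlocks (A.submatrix x y) 0 0 (A.submatrix y x) := by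
    ext (i | i) (j | j)
    · rfl
    · have : ¬ G.Adj (x i) (x j) := fun h => hcol _ _ h (by rw [hx, hx])
      simp [hA, this]
    · have : ¬ G.Adj (y i) (y j) := fun h => hcol _ _ h (by
        have := hy i; have := hy j; revert this; revert this
        cases col (y i) <;> cases col (y j) <;> cases κ <;> simp)
      simp [hA, this]
    · rfl
  have htr : A.submatrix y x = (A.submatrix x y).transpose := by
    ext i j
    simp [hA, adjMatrix_apply, G.adj_comm]
  have hdet : (A.submatrix (Sum.elim x y) (Sum.elim y x)).det = 0 := by
    by_contra hne
    have h6 := Matrix.rank_of_isUnit _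
      ((Matrix.isUnit_iff_isUnit_det _).2 (isUnit_iff_ne_zero.2 hne))
    have := Matrix.rank_submatrix_le A (Sum.elim x y) (Sum.elim y x)
    simp at h6
    omega
  rw [hblock, Matrix.det_fromBlocks_zero₂₁, htr, Matrix.det_transpose] at hdet
  exact mul_self_eq_zero.1 hdet

/-- If adjacency between the two colour classes depends only on a vertex's adjacencies to
`y₁, y₂` (colour `κ`) or to `x₁, x₂` (the other colour), following the path after labelling these
adjacency types by `fb` and `fw`, then the graph is a blow-up. -/
theorem blowup_of_types {V : Type} {G : SimpleGraph V} [DecidableRel G.Adj] (col : V → Bool)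
    (hcol : ∀ x y, G.Adj x y → col x ≠ col y) (κ : Bool) (x₁ x₂ y₁ y₂ : V)
    (fb fw : Bool → Bool → Fin 6)
    (hbb : ∀ p q p' q', pathAdj (fb p q) (fb p' q') = false)
    (hww : ∀ u v u' v', pathAdj (fw u v) (fw u' v') = false)
    (hbw : ∀ x y, col x = κ → col y ≠ κ → decide (G.Adj x y) =
      pathAdj (fb (decide (G.Adj x y₁)) (decide (G.Adj x y₂)))
        (fw (decide (G.Adj x₁ y)) (decide (G.Adj x₂ y)))) :
    ∃ f, IsBlowup G f := by
  have hsymm : ∀ i j, pathAdj i j = pathAdj j i := by decide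
  refine ⟨fun z => if col z = κ then fb (decide (G.Adj z y₁)) (decide (G.Adj z y₂))
    else fw (decide (G.Adj x₁ z)) (decide (G.Adj x₂ z)), fun x y => ?_⟩
  by_cases hx : col x = κ <;> by_cases hy : col y = κ
  · simp only [hx, hy, if_true, hbb]
    exact iff_of_false (fun h => hcol _ _ h (hx.trans hy.symm)) (by simp)
  · simp only [hx, hy, if_true, if_false]
    rw [← hbw x y hx hy, decide_eq_true_iff]
  · simp only [hx, hy, if_true, if_false]
    rw [hsymm, ← hbw y x hy hx, decide_eq_true_iff, G.adj_comm]
  · simp only [hx, hy, if_false, hww]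
    refine iff_of_false (fun h => hcol _ _ h ?_) (by simp)
    revert hx hy
    cases col x <;> cases col y <;> cases κ <;> simp

/-- A bipartite graph whose adjacency matrix has rank at most `4` is a blow-up of the path. -/
theorem exists_blowup {V : Type} [Fintype V] [DecidableEq V] {G : SimpleGraph V}
    [DecidableRel G.Adj] (col : V → Bool) (hcol : ∀ x y, G.Adj x y → col x ≠ col y)
    (hr : (G.adjMatrix ℝ).rank ≤ 4) : ∃ f, IsBlowup G f := by
  by_cases hbase : ∃ x₁ x₂ y₁ y₂, col x₁ = col x₂ ∧ G.Adj x₁ y₁ ∧ ¬ G.Adj x₁ y₂ ∧ G.Adj x₂ y₂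
  · -- The minor on rows `x₁, x₂` and columns `y₁, y₂` is `1`, so bordering it expresses every entry
    -- of the biadjacency matrix in terms of these two rows and columns.
    obtain ⟨x₁, x₂, y₁, y₂, hx, h11, h12, h22⟩ := hbase
    set κ := col x₁ with hκ
    have hy1 : col y₁ ≠ κ := (hcol _ _ h11).symm
    have hy2 : col y₂ ≠ κ := by rw [hx]; exact (hcol _ _ h22).symm
    have key : ∀ x y, col x = κ → col y ≠ κ →
        ((decide (G.Adj x y)).toInt = (decide (G.Adj x y₁)).toInt * (decide (G.Adj x₁ y)).toInt +
          (decide (G.Adj x y₂)).toInt * ((decide (G.Adj x₂ y)).toInt -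
            (decide (G.Adj x₂ y₁)).toInt * (decide (G.Adj x₁ y)).toInt)) := by
      intro x y hxx hyy
      have h := det_three_eq_zero col hcol hr κ ![x₁, x₂, x] ![y₁, y₂, y]
        (by intro i; fin_cases i <;> simp [hκ, ← hx, hxx])
        (by intro i; fin_cases i <;> simp [hy1, hy2, hyy])
      rw [Matrix.det_fin_three] at h
      simp only [Matrix.submatrix_apply, adjMatrix_apply] at h
      simp [h11, h12, h22] at h
      by_cases a1 : G.Adj x y <;> by_cases a2 : G.Adj x y₁ <;> by_cases a3 : G.Adj x₁ y <;>
        by_cases a4 : G.Adj x y₂ <;> by_cases a5 : G.Adj x₂ y <;> by_cases a6 : G.Adj x₂ y₁ <;>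
        simp [a1, a2, a3, a4, a5, a6] at h ⊢ <;> norm_num at h
    -- The value of `G.Adj x₂ y₁` fixes the formula. Whether the type of `x₀` below occurs decides
    -- which side of the bipartition has three classes, since entries must stay in `{0, 1}`.
    by_cases hs : G.Adj x₂ y₁
    · by_cases hno : ∃ x, col x = κ ∧ ¬ G.Adj x y₁ ∧ G.Adj x y₂
      · obtain ⟨x₀, hx0, h01, h02⟩ := hno
        refine blowup_of_types col hcol κ x₁ x₂ y₁ y₂
          (fun p q => if p && !q then 0 else if p && q then 2 else if q then 4 else 5)
          (fun u v => if u && v then 1 else if !u && v then 3 else 5) (by decide) (by decide) ?_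
        intro x y hxx hyy
        have h1 := key x y hxx hyy
        have h0 := key x₀ y hx0 hyy
        simp only [hs, h01, h02] at h0 h1
        generalize decide (G.Adj x y) = w at *
        generalize decide (G.Adj x y₁) = p at *
        generalize decide (G.Adj x y₂) = q at *
        generalize decide (G.Adj x₁ y) = u at *
        generalize decide (G.Adj x₂ y) = v at *
        generalize decide (G.Adj x₀ y) = w0 at *
        revert w p q u v w0
        decide
      · refine blowup_of_types col hcol κ x₁ x₂ y₁ y₂
          (fun p q => if p && !q then 1 else if p && q then 3 else 5)
          (fun u v => if u && !v then 0 else if u && v then 2 else if v then 4 else 5)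
          (by decide) (by decide) ?_
        intro x y hxx hyy
        have h1 := key x y hxx hyy
        have h0 : ¬ (decide (G.Adj x y₁) = false ∧ decide (G.Adj x y₂) = true) := by
          simpa using fun a b => hno ⟨x, hxx, a, b⟩
        simp only [hs] at h1
        generalize decide (G.Adj x y) = w at *
        generalize decide (G.Adj x y₁) = p at *
        generalize decide (G.Adj x y₂) = q at *
        generalize decide (G.Adj x₁ y) = u at *
        generalize decide (G.Adj x₂ y) = v at *
        clear hno
        revert w p q u v
        decide
    · by_cases hno : ∃ x, col x = κ ∧ G.Adj x y₁ ∧ G.Adj x y₂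
      · obtain ⟨x₀, hx0, h01, h02⟩ := hno
        refine blowup_of_types col hcol κ x₁ x₂ y₁ y₂
          (fun p q => if p && !q then 0 else if p && q then 2 else if q then 4 else 5)
          (fun u v => if u && !v then 1 else if !u && v then 3 else 5) (by decide) (by decide) ?_
        intro x y hxx hyy
        have h1 := key x y hxx hyy
        have h0 := key x₀ y hx0 hyy
        simp only [hs, h01, h02] at h0 h1
        generalize decide (G.Adj x y) = w at *
        generalize decide (G.Adj x y₁) = p at *
        generalize decide (G.Adj x y₂) = q at *
        generalize decide (G.Adj x₁ y) = u at *
        generalize decide (G.Adj x₂ y) = v at *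
        generalize decide (G.Adj x₀ y) = w0 at *
        revert w p q u v w0
        decide
      · refine blowup_of_types col hcol κ x₁ x₂ y₁ y₂
          (fun p q => if p && !q then 1 else if !p && q then 3 else 5)
          (fun u v => if u && !v then 0 else if u && v then 2 else if v then 4 else 5)
          (by decide) (by decide) ?_
        intro x y hxx hyy
        have h1 := key x y hxx hyy
        have h0 : ¬ (decide (G.Adj x y₁) = true ∧ decide (G.Adj x y₂) = true) := by
          simpa using fun a b => hno ⟨x, hxx, a, b⟩
        simp only [hs] at h1
        generalize decide (G.Adj x y) = w at *
        generalize decide (G.Adj x y₁) = p at *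
        generalize decide (G.Adj x y₂) = q at *
        generalize decide (G.Adj x₁ y) = u at *
        generalize decide (G.Adj x₂ y) = v at *
        clear hno
        revert w p q u v
        decide
  · -- Here the graph is complete bipartite up to isolated vertices.
    classical
    push Not at hbase
    refine ⟨fun z => if ∃ w, G.Adj z w then (if col z then 0 else 1) else 5, fun x y => ?_⟩
    by_cases hx : ∃ w, G.Adj x w
    · by_cases hy : ∃ w, G.Adj y w
      · obtain ⟨x', hx'⟩ := hx
        obtain ⟨y', hy'⟩ := hy
        have e1 : ∃ w, G.Adj x w := ⟨_, hx'⟩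
        have e2 : ∃ w, G.Adj y w := ⟨_, hy'⟩
        simp only [e1, e2, if_true]
        have hA : G.Adj x y ↔ col x ≠ col y := by
          refine ⟨hcol x y, fun hne => ?_⟩
          by_contra hn
          refine hbase x y' x' y ?_ hx' hn hy'.symm
          have := hcol _ _ hy'
          revert this hne
          cases col x <;> cases col y <;> cases col y' <;> simp
        rw [hA]
        cases col x <;> cases col y <;> simp [pathAdj]
      · have : ¬ G.Adj x y := fun h => hy ⟨x, h.symm⟩
        simp [hy, this, pathAdj]
    · have : ¬ G.Adj x y := fun h => hx ⟨y, h⟩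
      simp [hx, this, pathAdj]

/-! ### The double star as a blow-up -/

theorem iso_of_classSize {V W : Type} [Fintype V] [Fintype W] {G : SimpleGraph V}
    {H : SimpleGraph W} {f : V → Fin 6} {g : W → Fin 6} (hf : IsBlowup G f) (hg : IsBlowup H g)
    (h : ∀ i, classSize f i = classSize g i) : Nonempty (G ≃g H) := by
  have e : ∀ i, {x // f x = i} ≃ {y // g y = i} := fun i => Fintype.equivOfCardEq (h i)
  let φ : V ≃ W := (Equiv.sigmaFiberEquiv f).symm.trans
    ((Equiv.sigmaCongrRight e).trans (Equiv.sigmaFiberEquiv g))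
  have hφ : ∀ x, g (φ x) = f x := fun x => (e (f x) ⟨x, rfl⟩).2
  exact ⟨⟨φ, fun {x y} => by rw [hf, hg, hφ, hφ]⟩⟩

/-- The map from the double star `P₂(1,n)` whose values on the leaf of the first centre, the two
centres and the leaves of the second centre are `p`, `q`, `r`, `s`. -/
def starMap (n : ℕ) {α : Type} (p q r s : α) : Option (Fin 1) ⊕ Option (Fin n) → α
  | Sum.inl (some _) => p
  | Sum.inl none => q
  | Sum.inr none => r
  | Sum.inr (some _) => s

theorem isBlowup_starMap (n : ℕ) {p q r s : Fin 6}
    (h : ∀ i j : Fin 4, pathAdj (![p, q, r, s] i) (![p, q, r, s] j) =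
      (i.val + 1 == j.val || j.val + 1 == i.val)) :
    IsBlowup (doubleStar 1 n) (starMap n p q r s) := by
  have hv : ∀ x, starMap n p q r s x = ![p, q, r, s] (starMap n 0 1 2 3 x) := by
    rintro ((_ | _) | (_ | _)) <;> rfl
  intro x y
  rw [hv, hv, h]
  rcases x with ((_ | _) | (_ | _)) <;> rcases y with ((_ | _) | (_ | _)) <;>
    simp [doubleStar, starMap, Fin.fin_one_eq_zero]

theorem classSize_starMap (n : ℕ) (p q r s i : Fin 6) :
    classSize (starMap n p q r s) i = (if q = i then 1 else 0) + (if p = i then 1 else 0) +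
      ((if r = i then 1 else 0) + n * (if s = i then 1 else 0)) := by
  rw [classSize_eq_sum, Fintype.sum_sum_type, Fintype.sum_option, Fintype.sum_option]
  change (if q = i then 1 else 0) + (∑ _ : Fin 1, if p = i then 1 else 0) +
    ((if r = i then 1 else 0) + ∑ _ : Fin n, if s = i then 1 else 0) = _
  rw [Finset.sum_const, Finset.sum_const, Finset.card_univ, Finset.card_univ, Fintype.card_fin,
    Fintype.card_fin, one_smul, smul_eq_mul]

theorem rank_doubleStar (n : ℕ) [DecidableRel (doubleStar 1 n).Adj] :
    ((doubleStar 1 n).adjMatrix ℝ).rank ≤ 4 := by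
  have h : IsBlowup (doubleStar 1 n) (starMap n 0 1 2 3) := isBlowup_starMap n (by decide)
  have h4 : (doubleStar 1 n).adjMatrix ℝ =
      (pathMatrix.submatrix ![0, 1, 2, 3] ![0, 1, 2, 3]).submatrix
        (starMap n (0 : Fin 4) 1 2 3) (starMap n (0 : Fin 4) 1 2 3) := by
    rw [h.adjMatrix_eq, Matrix.submatrix_submatrix]
    congr 1 <;> ext x <;> rcases x with ((_ | _) | (_ | _)) <;> rfl
  rw [h4]
  exact (Matrix.rank_submatrix_le _ _ _).trans (Matrix.rank_le_width _)

/-! ### The Diophantine problem for the class sizes -/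

/-- The case of four consecutive classes: all sizes are odd, and an odd
number other than `1` is at least `3`, which makes the product `n` too large against `h1` unless
three consecutive sizes are `1`. -/
theorem arith_four {a b c d n : ℕ} (hn : Odd n) (h1 : a * b + b * c + c * d = n + 2)
    (h2 : a * b * c * d = n) :
    (a = 1 ∧ b = 1 ∧ c = 1 ∧ d = n) ∨ (a = n ∧ b = 1 ∧ c = 1 ∧ d = 1) := by
  rw [← h2] at hn
  simp only [Nat.odd_mul] at hn
  obtain ⟨⟨⟨ha, hb⟩, hc⟩, hd⟩ := hn
  have three : ∀ m : ℕ, Odd m → m = 1 ∨ 3 ≤ m := by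
    rintro m ⟨k, rfl⟩; omega
  have hb1 := hb.pos
  have hc1 := hc.pos
  -- If an end class is a singleton, so are the next two.
  have one : ∀ b c d : ℕ, Odd b → Odd c → Odd d → b + b * c + c * d = b * c * d + 2 →
      (b = 1 ∧ c = 1) := by
    intro b c d hb hc hd h
    have hb1 := hb.pos
    have hc1 := hc.pos
    have hd1 := hd.pos
    rcases three b hb with rfl | hb3
    · exact ⟨rfl, by nlinarith⟩
    · rcases three c hc with rfl | hc3
      · rcases three d hd with rfl | hd3
        · omega
        · nlinarith
      · rcases three d hd with rfl | hd3
        · nlinarith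
        · nlinarith [Nat.mul_le_mul hb3 hc3, Nat.mul_le_mul hb3 hd3, Nat.mul_le_mul hc3 hd3,
            Nat.mul_le_mul (Nat.mul_le_mul_left b hc3) hd3,
            Nat.mul_le_mul (Nat.mul_le_mul_left b (le_refl c)) hd3,
            Nat.mul_le_mul_right d (Nat.mul_le_mul_right c hb3)]
  rcases three a ha with rfl | ha3
  · obtain ⟨rfl, rfl⟩ := one b c d hb hc hd (by rw [← h2] at h1; linarith)
    left; refine ⟨rfl, rfl, rfl, by simpa using h2⟩
  · rcases three d hd with rfl | hd3
    · obtain ⟨rfl, rfl⟩ := one c b a hc hb ha (by rw [← h2] at h1; linarith)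
      right; refine ⟨by simpa using h2, rfl, rfl, rfl⟩
    · exfalso
      obtain ⟨X, hX⟩ : ∃ X, X = a * b := ⟨_, rfl⟩
      obtain ⟨Y, hY⟩ : ∃ Y, Y = c * d := ⟨_, rfl⟩
      have hXb : 3 * b ≤ X := hX ▸ Nat.mul_le_mul_right b ha3
      have hYc : 3 * c ≤ Y := by rw [hY, mul_comm c d]; exact Nat.mul_le_mul_right c hd3
      have hXY : X * Y = n := by rw [hX, hY, ← h2]; ring
      have hbc : 9 * (b * c) ≤ X * Y := by
        calc 9 * (b * c) = (3 * b) * (3 * c) := by ring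
          _ ≤ _ := Nat.mul_le_mul hXb hYc
      rw [← hX, ← hY] at h1
      nlinarith

/-- When `a` and `e` are positive the equations are incompatible: repeated use of
`x + y ≤ x * y + 1` bounds the edge count by `n + 1`. Otherwise `arith_four` applies. -/
theorem arith_five {a b c d e n : ℕ} (hn : Odd n) (h1 : a * b + b * c + c * d + d * e = n + 2)
    (h2 : b * d * (a * c + c * e + a * e) = n) :
    (e = 0 ∧ a = 1 ∧ b = 1 ∧ c = 1 ∧ d = n) ∨ (e = 0 ∧ a = n ∧ b = 1 ∧ c = 1 ∧ d = 1) ∨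
    (a = 0 ∧ b = 1 ∧ c = 1 ∧ d = 1 ∧ e = n) ∨ (a = 0 ∧ b = n ∧ c = 1 ∧ d = 1 ∧ e = 1) := by
  rcases Nat.eq_zero_or_pos e with rfl | he
  · rcases arith_four (a := a) (b := b) (c := c) (d := d) hn (by simpa using h1)
      (by rw [← h2]; ring) with h | h
    · exact Or.inl ⟨rfl, h⟩
    · exact Or.inr (Or.inl ⟨rfl, h⟩)
  rcases Nat.eq_zero_or_pos a with rfl | ha
  · rcases arith_four (a := b) (b := c) (c := d) (d := e) hn (by simpa using h1)
      (by rw [← h2]; ring) with h | h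
    · exact Or.inr (Or.inr (Or.inl ⟨rfl, h⟩))
    · exact Or.inr (Or.inr (Or.inr ⟨rfl, h⟩))
  exfalso
  have hbd : 0 < b * d := by
    rcases Nat.eq_zero_or_pos (b * d) with h | h
    · rw [h, zero_mul] at h2; subst h2; simp at hn
    · exact h
  have hb : 0 < b := Nat.pos_of_mul_pos_right hbd
  have hd : 0 < d := Nat.pos_of_mul_pos_left hbd
  have sub : ∀ x y : ℕ, 0 < x → 0 < y → x + y ≤ x * y + 1 := by
    intro x y hx hy; nlinarith
  rcases Nat.eq_zero_or_pos c with rfl | hc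
  · have := sub (a * b) (d * e) (by positivity) (by positivity)
    nlinarith
  · have e1 := Nat.mul_le_mul_left b (sub a c ha hc)
    have e2 := Nat.mul_le_mul_left d (sub c e hc he)
    have e3 := sub b d hb hd
    have e4 : b * d * 1 ≤ b * d * (a * e) := Nat.mul_le_mul_left _ (Nat.mul_pos ha he)
    have e5 : b * (a * c) * 1 ≤ b * (a * c) * d := Nat.mul_le_mul_left _ hd
    have e6 : d * (c * e) * 1 ≤ d * (c * e) * b := Nat.mul_le_mul_left _ hb
    nlinarith

/-- for `n ≥ 1`, if some graph is cospectral to `P₂(1,n)` but not isomorphic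
to it, then `n` is even. -/
theorem cospectral_not_iso_even (n : ℕ) (hn : 1 ≤ n)
    {V : Type} [Fintype V] [DecidableEq V] (G : SimpleGraph V)
    (h : Cospectral (doubleStar 1 n) G)
    (hiso : ¬ Nonempty (G ≃g doubleStar 1 n)) : Even n := by
  classical
  by_contra hodd
  rw [Nat.not_even_iff_odd] at hodd
  set D := doubleStar 1 n
  have hp : (D.adjMatrix ℝ).charpoly = (G.adjMatrix ℝ).charpoly := by
    unfold Cospectral charPoly at h
    convert h
  have hD : (D.adjMatrix ℝ).IsHermitian := D.isSymm_adjMatrix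
  have hG : (G.adjMatrix ℝ).IsHermitian := G.isSymm_adjMatrix
  have htr : ∀ k, ((G.adjMatrix ℝ) ^ k).trace = ((D.adjMatrix ℝ) ^ k).trace := fun k => by
    rw [trace_pow_eq_sum_roots hG, trace_pow_eq_sum_roots hD, hp]
  have hcard : Fintype.card V = n + 3 := by
    have := congrArg natDegree hp
    rw [Matrix.charpoly_natDegree_eq_dim, Matrix.charpoly_natDegree_eq_dim] at this
    rw [← this]
    simp
    omega
  have hDb : IsBlowup D (starMap n 0 1 2 3) := isBlowup_starMap n (by decide)
  have hrank : (G.adjMatrix ℝ).rank ≤ 4 := by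
    rw [rank_eq_card_roots hG, ← hp, ← rank_eq_card_roots hD]
    exact rank_doubleStar n
  obtain ⟨col⟩ := colorable_of_trace (G := G) fun k hk => by
    rw [htr, trace_odd_blowup hDb hk]
  obtain ⟨f, hf⟩ := exists_blowup (G := G) (fun x => decide (col x = 0))
    (fun x y hxy => by
      have := col.valid hxy
      revert this
      generalize col x = i
      generalize col y = j
      revert i j
      decide) hrank
  have hsum := sum_classSize f
  rw [hcard] at hsum
  obtain ⟨a, ha⟩ : ∃ a, classSize f 0 = a := ⟨_, rfl⟩
  obtain ⟨b, hb⟩ : ∃ b, classSize f 1 = b := ⟨_, rfl⟩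
  obtain ⟨c, hc⟩ : ∃ c, classSize f 2 = c := ⟨_, rfl⟩
  obtain ⟨d, hd⟩ : ∃ d, classSize f 3 = d := ⟨_, rfl⟩
  obtain ⟨e, he⟩ : ∃ e, classSize f 4 = e := ⟨_, rfl⟩
  have hsum' : a + b + c + d + e + classSize f 5 = n + 3 := by
    rw [← hsum, ← ha, ← hb, ← hc, ← hd, ← he, Fin.sum_univ_six]
  have t2 := htr 2
  rw [trace_sq_blowup hf ha hb hc hd he, trace_sq_blowup hDb (classSize_starMap ..)
    (classSize_starMap ..) (classSize_starMap ..) (classSize_starMap ..)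
    (classSize_starMap ..)] at t2
  have t4 := htr 4
  rw [trace_four_blowup hf ha hb hc hd he, trace_four_blowup hDb (classSize_starMap ..)
    (classSize_starMap ..) (classSize_starMap ..) (classSize_starMap ..)
    (classSize_starMap ..)] at t4
  simp at t2 t4
  have h1R : (a * b + b * c + c * d + d * e : ℝ) = n + 2 := by linarith
  have h1 : a * b + b * c + c * d + d * e = n + 2 := by exact_mod_cast h1R
  have h2 : b * d * (a * c + c * e + a * e) = n := by
    rw [h1R] at t4
    have : (b * d * (a * c + c * e + a * e) : ℝ) = n := by linarith
    exact_mod_cast this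
  -- Each of the four solutions embeds the path of `P₂(1,n)` into the path `0 - ⋯ - 4`.
  have finish : ∀ p q r s : Fin 6, (∀ i j : Fin 4, pathAdj (![p, q, r, s] i) (![p, q, r, s] j) =
      (i.val + 1 == j.val || j.val + 1 == i.val)) →
      (∀ i, classSize f i = (if q = i then 1 else 0) + (if p = i then 1 else 0) +
      ((if r = i then 1 else 0) + n * (if s = i then 1 else 0))) → False :=
    fun p q r s hadj hcl => hiso (iso_of_classSize hf (isBlowup_starMap n hadj)
      fun i => (hcl i).trans (classSize_starMap n p q r s i).symm)
  rcases arith_five hodd h1 h2 with ⟨rfl, rfl, rfl, rfl, rfl⟩ | ⟨rfl, rfl, rfl, rfl, rfl⟩ |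
    ⟨rfl, rfl, rfl, rfl, rfl⟩ | ⟨rfl, rfl, rfl, rfl, rfl⟩
  · refine finish 0 1 2 3 (by decide) fun i => ?_
    fin_cases i <;> simp <;> omega
  · refine finish 3 2 1 0 (by decide) fun i => ?_
    fin_cases i <;> simp <;> omega
  · refine finish 1 2 3 4 (by decide) fun i => ?_
    fin_cases i <;> simp <;> omega
  · refine finish 4 3 2 1 (by decide) fun i => ?_
    fin_cases i <;> simp <;> omega
end

section
/- Let n ≥ 3 and let G be a finite simple graph cospectral to the double star P_2(1,n). Then G has exactly one connected component containing an edge, and that component is bipartite and has diameter exactly 3. -/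
/-!
The characteristic polynomial of `P₂(1,n)` is `X^(n-1) (X^4 - (n+2) X^2 + n)`, because its adjacency
matrix factors through a four-dimensional space (`charpoly_doubleStar`). The nonzero eigenvalues are
therefore `±α, ±β` with `0 < β < 1 < α` (`roots_doubleStar`). Let `G` be cospectral to it.

* The spectrum is symmetric, so all odd power traces of the adjacency matrix vanish. There is then
  no closed walk of odd length, and `G` is bipartite (`colorable_two_of_trace`).
* Only one eigenvalue, counted with multiplicity, is at least `1`. Two edges with no edge between
  them would span a plane on which the Rayleigh quotient equals `1`, and that plane contains a
  nonzero vector orthogonal to the `α`-eigenvector, where the quotient is less than `1`. So any two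
  edges of `G` meet or are joined by an edge (`adj_of_two_edges`). Hence at most one component
  has an edge, and its diameter is at most `3`.
* If that component had diameter at most `2`, then being bipartite it would be complete bipartite.
  An eigenvector for `β` would be constant on each side and vanish off the component, which forces
  `β ^ 2` to be a product of two positive degrees. This contradicts `0 < β < 1`.
-/

open Polynomial SimpleGraph

lemma charpoly_doubleStar (n : ℕ) (hn : 1 ≤ n) :
    charPoly (doubleStar 1 n) =
      X ^ (n - 1) * (X ^ 4 - C ((n : ℝ) + 2) * X ^ 2 + C (n : ℝ)) := by
  classical
  -- `u x` is the coordinate vector of the class of `x` (the two centers, the leaf of the first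
  -- center, the leaves of the second); `w x` indicates the classes adjacent to `x`.
  let u : Option (Fin 1) ⊕ Option (Fin n) → Fin 4 → ℝ := fun x => match x with
    | .inl none => ![1, 0, 0, 0]
    | .inr none => ![0, 1, 0, 0]
    | .inl (some _) => ![0, 0, 1, 0]
    | .inr (some _) => ![0, 0, 0, 1]
  let w : Option (Fin 1) ⊕ Option (Fin n) → Fin 4 → ℝ := fun x => match x with
    | .inl none => ![0, 1, 1, 0]
    | .inr none => ![1, 0, 0, 1]
    | .inl (some _) => ![1, 0, 0, 0]
    | .inr (some _) => ![0, 1, 0, 0]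
  have hfac : @SimpleGraph.adjMatrix ℝ _ (doubleStar 1 n) (Classical.decRel _) _ _
      = Matrix.of u * Matrix.of fun i x => w x i := by
    ext x y
    rw [SimpleGraph.adjMatrix_apply]
    rcases x with (_ | x) | (_ | x) <;> rcases y with (_ | y) | (_ | y) <;>
      simp [doubleStar, Matrix.mul_apply, Fin.sum_univ_four, u, w, Fin.fin_one_eq_zero]
  have hprod : (Matrix.of fun i x => w x i) * Matrix.of u =
      !![0, 1, 1, 0; 1, 0, 0, (n : ℝ); 1, 0, 0, 0; 0, 1, 0, 0] := by
    ext i j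
    fin_cases i <;> fin_cases j <;>
      simp [Matrix.mul_apply, u, w]
  have hcard : Fintype.card (Fin 4) ≤ Fintype.card (Option (Fin 1) ⊕ Option (Fin n)) := by
    simp; omega
  unfold charPoly
  simp only [hfac]
  rw [Matrix.charpoly_mul_comm_of_le _ _ hcard, hprod]
  congr 1
  · congr 1
    simp; omega
  · simp [Matrix.charpoly, Matrix.det_succ_row_zero, Fin.sum_univ_succ, Matrix.charmatrix_apply,
      Fin.succAbove, Matrix.diagonal_apply]
    rw [show (C 2 : ℝ[X]) = 2 from rfl]
    ring

/-- With `s = √(n² + 4)`, the squares of the nonzero eigenvalues are `(n + 2 ± s) / 2`, and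
`n < s < n + 2`. -/
lemma roots_doubleStar (n : ℕ) (hn : 1 ≤ n) :
    ∃ α β : ℝ, 1 < α ∧ 0 < β ∧ β < 1 ∧
      (charPoly (doubleStar 1 n)).roots = Multiset.replicate (n - 1) 0 + {α, -α, β, -β} := by
  have hn' : (1 : ℝ) ≤ n := by exact_mod_cast hn
  set s := √((n : ℝ) ^ 2 + 4) with hs
  have hs2 : s ^ 2 = (n : ℝ) ^ 2 + 4 := Real.sq_sqrt (by positivity)
  have hs0 : 0 ≤ s := Real.sqrt_nonneg _
  have h1 : (n : ℝ) < s := by nlinarith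
  have h2 : s < n + 2 := by nlinarith
  set α := √(((n : ℝ) + 2 + s) / 2) with hα
  set β := √(((n : ℝ) + 2 - s) / 2) with hβ
  have hα2 : α ^ 2 = ((n : ℝ) + 2 + s) / 2 := Real.sq_sqrt (by linarith)
  have hβ2 : β ^ 2 = ((n : ℝ) + 2 - s) / 2 := Real.sq_sqrt (by linarith)
  have hα0 : 0 ≤ α := Real.sqrt_nonneg _
  refine ⟨α, β, by nlinarith, Real.sqrt_pos.2 (by linarith), ?_, ?_⟩
  · rw [hβ, Real.sqrt_lt' one_pos]; linarith
  · rw [charpoly_doubleStar n hn]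
    have hsum : (n : ℝ) + 2 = α ^ 2 + β ^ 2 := by linarith
    have hmul : (n : ℝ) = α ^ 2 * β ^ 2 := by rw [hα2, hβ2]; linarith
    have : (X ^ (n - 1) * (X ^ 4 - C ((n : ℝ) + 2) * X ^ 2 + C (n : ℝ)) : ℝ[X]) =
        ((Multiset.replicate (n - 1) 0 + {α, -α, β, -β}).map fun a => X - C a).prod := by
      rw [hsum, show C (n : ℝ) = C (α ^ 2 * β ^ 2) from congrArg C hmul]
      simp
      ring
    rw [this, roots_multiset_prod_X_sub_C]

lemma trace_pow_eq_sum_eigenvalues {V : Type} [Fintype V] [DecidableEq V] {A : Matrix V V ℝ}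
    (hA : A.IsHermitian) (k : ℕ) : (A ^ k).trace = ∑ i, hA.eigenvalues i ^ k := by
  conv_lhs => rw [hA.spectral_theorem]
  rw [← map_pow, Unitary.conjStarAlgAut_apply, Matrix.trace_mul_comm, ← mul_assoc]
  simp [Matrix.diagonal_pow, Matrix.trace_diagonal]

/-- A nonzero vector orthogonal to every basis eigenvector with eigenvalue at least `1` has Rayleigh
quotient less than `1`. -/
lemma rayleigh_lt_of_orthogonal {V : Type} [Fintype V] [DecidableEq V] {A : Matrix V V ℝ}
    (hA : A.IsHermitian) (x : V → ℝ) (hx : x ≠ 0)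
    (h : ∀ i, 1 ≤ hA.eigenvalues i → (hA.eigenvectorBasis i).ofLp ⬝ᵥ x = 0) :
    x ⬝ᵥ A.mulVec x < x ⬝ᵥ x := by
  have key (y : V → ℝ) : x ⬝ᵥ y =
      ∑ i, ((hA.eigenvectorBasis i).ofLp ⬝ᵥ x) * ((hA.eigenvectorBasis i).ofLp ⬝ᵥ y) := by
    have := hA.eigenvectorBasis.sum_inner_mul_inner (WithLp.toLp 2 x) (WithLp.toLp 2 y)
    simp only [EuclideanSpace.inner_eq_star_dotProduct, star_trivial] at this
    rw [dotProduct_comm x y, ← this]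
    exact Finset.sum_congr rfl fun i _ => by rw [dotProduct_comm y]
  have hmul (i : V) : (hA.eigenvectorBasis i).ofLp ⬝ᵥ A.mulVec x =
      hA.eigenvalues i * ((hA.eigenvectorBasis i).ofLp ⬝ᵥ x) := by
    rw [Matrix.dotProduct_mulVec, ← Matrix.mulVec_transpose,
      show A.transpose = A by simpa using hA.eq, hA.mulVec_eigenvectorBasis]
    simp
  have hpos : 0 < x ⬝ᵥ x := by
    have := Matrix.dotProduct_star_self_pos_iff.2 hx
    simpa using this
  -- Compare `∑ λᵢ ⟪vᵢ, x⟫²` with `∑ ⟪vᵢ, x⟫²` term by term.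
  rw [key (A.mulVec x), key x]
  rw [key x] at hpos
  have hex : ∃ i ∈ Finset.univ,
      0 < ((hA.eigenvectorBasis i).ofLp ⬝ᵥ x) * ((hA.eigenvectorBasis i).ofLp ⬝ᵥ x) := by
    by_contra! hcon
    exact absurd (Finset.sum_nonpos hcon) (not_le.2 hpos)
  obtain ⟨i, _, hi⟩ := hex
  refine Finset.sum_lt_sum (fun j _ => ?_) ⟨i, Finset.mem_univ _, ?_⟩
  · rw [hmul]
    rcases le_or_gt 1 (hA.eigenvalues j) with hj | hj
    · simp [h j hj]
    · nlinarith [mul_self_nonneg ((hA.eigenvectorBasis j).ofLp ⬝ᵥ x)]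
  · rw [hmul]
    rcases le_or_gt 1 (hA.eigenvalues i) with hj | hj
    · simp [h i hj] at hi
    · nlinarith

/-- If at most one eigenvalue is at least `1`, the graph contains no induced pair of disjoint
edges. -/
lemma adj_of_two_edges {V : Type} [Fintype V] [DecidableEq V] (G : SimpleGraph V)
    [DecidableRel G.Adj] (hA : (G.adjMatrix ℝ).IsHermitian)
    (huniq : ∀ i j, 1 ≤ hA.eigenvalues i → 1 ≤ hA.eigenvalues j → i = j)
    {a b c d : V} (hab : G.Adj a b) (hcd : G.Adj c d) :
    G.Adj a c ∨ G.Adj a d ∨ G.Adj b c ∨ G.Adj b d := by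
  by_contra! hcon
  obtain ⟨hac, had, hbc, hbd⟩ := hcon
  have nac : a ≠ c := by rintro rfl; exact had hcd
  have nad : a ≠ d := by rintro rfl; exact hac hcd.symm
  have nbc : b ≠ c := by rintro rfl; exact hbd hcd
  have nbd : b ≠ d := by rintro rfl; exact hbc hcd.symm
  -- Choose `s (e_a + e_b) + t (e_c + e_d)` orthogonal to the eigenvector of the large eigenvalue.
  have hst : ∃ s t : ℝ, s ^ 2 + t ^ 2 ≠ 0 ∧ ∀ i, 1 ≤ hA.eigenvalues i →
      s * (hA.eigenvectorBasis i a + hA.eigenvectorBasis i b) +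
        t * (hA.eigenvectorBasis i c + hA.eigenvectorBasis i d) = 0 := by
    by_cases hex : ∃ i, 1 ≤ hA.eigenvalues i
    · obtain ⟨i, hi⟩ := hex
      set p := hA.eigenvectorBasis i a + hA.eigenvectorBasis i b with hp
      set q := hA.eigenvectorBasis i c + hA.eigenvectorBasis i d with hq
      by_cases hpz : p = 0
      · refine ⟨1, 0, by norm_num, fun j hj => ?_⟩
        rw [huniq j i hj hi, ← hp, hpz]; ring
      · refine ⟨q, -p, by have := pow_pos (abs_pos.2 hpz) 2; rw [sq_abs] at this; nlinarith, fun j hj => ?_⟩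
        rw [huniq j i hj hi, ← hp, ← hq]; ring
    · push Not at hex
      exact ⟨1, 0, by norm_num, fun i hi => absurd hi (not_le.2 (hex i))⟩
  obtain ⟨s, t, hne, horth⟩ := hst
  let x : V → ℝ := Pi.single a s + Pi.single b s + Pi.single c t + Pi.single d t
  have hxx : x ⬝ᵥ x = 2 * (s ^ 2 + t ^ 2) := by
    simp [x, dotProduct_add, hab.ne, hab.ne.symm, hcd.ne, hcd.ne.symm, nac, nac.symm, nad,
      nad.symm, nbc, nbc.symm, nbd, nbd.symm]
    ring
  have hxA : x ⬝ᵥ (G.adjMatrix ℝ).mulVec x = 2 * (s ^ 2 + t ^ 2) := by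
    simp [x, add_dotProduct, Matrix.mulVec_add, hab, hab.symm, hcd, hcd.symm, hac, had, hbc, hbd,
      mt G.adj_symm hac, mt G.adj_symm had, mt G.adj_symm hbc, mt G.adj_symm hbd]
    ring
  have hx : x ≠ 0 := by
    intro h0
    rw [h0] at hxx
    simp at hxx
    exact hne (by linarith)
  have := rayleigh_lt_of_orthogonal hA x hx fun i hi => by
    have := horth i hi
    simp only [x, dotProduct_add, dotProduct_single]
    linarith
  rw [hxx, hxA] at this
  exact lt_irrefl _ this

lemma spectrum_of_cospectral (n : ℕ) (hn : 1 ≤ n)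
    {V : Type} [Fintype V] [DecidableEq V] (G : SimpleGraph V) [DecidableRel G.Adj]
    (h : Cospectral (doubleStar 1 n) G) (hA : (G.adjMatrix ℝ).IsHermitian) :
    ∃ α β : ℝ, 1 < α ∧ 0 < β ∧ β < 1 ∧
      Finset.univ.val.map hA.eigenvalues = Multiset.replicate (n - 1) 0 + {α, -α, β, -β} := by
  obtain ⟨α, β, hα, hβ0, hβ1, hr⟩ := roots_doubleStar n hn
  refine ⟨α, β, hα, hβ0, hβ1, ?_⟩
  rw [← hr, show charPoly (doubleStar 1 n) = charPoly G from h]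
  have : charPoly G = (G.adjMatrix ℝ).charpoly := by
    unfold charPoly; congr!
  rw [this, hA.roots_charpoly_eq_eigenvalues]
  rfl

/-- A trace of a power of the adjacency matrix counts closed walks, so vanishing odd traces exclude
odd closed walks. -/
lemma colorable_two_of_trace {V : Type} [Fintype V] [DecidableEq V] (G : SimpleGraph V)
    [DecidableRel G.Adj] (h : ∀ k, Odd k → (G.adjMatrix ℝ ^ k).trace = 0) : G.Colorable 2 := by
  rw [two_colorable_iff_forall_loop_even]
  intro u w
  by_contra hodd
  rw [Nat.not_even_iff_odd] at hodd
  have h0 := h _ hodd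
  have hnn : ∀ v ∈ Finset.univ, 0 ≤ (G.adjMatrix ℝ ^ w.length) v v := fun v _ => by
    rw [SimpleGraph.adjMatrix_pow_apply_eq_card_walk]; positivity
  have hu := (Finset.sum_eq_zero_iff_of_nonneg hnn).1 h0 u (Finset.mem_univ u)
  rw [SimpleGraph.adjMatrix_pow_apply_eq_card_walk] at hu
  have : 0 < Fintype.card {p : G.Walk u u | p.length = w.length} :=
    Fintype.card_pos_iff.2 ⟨⟨w, rfl⟩⟩
  norm_cast at hu
  omega

/-- What the spectrum says about the graph: it is bipartite, has no induced pair of disjoint edges,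
and has an eigenvector for an eigenvalue strictly between `0` and `1`. -/
lemma spectral_facts (n : ℕ) (hn : 1 ≤ n)
    {V : Type} [Fintype V] [DecidableEq V] (G : SimpleGraph V) [DecidableRel G.Adj]
    (h : Cospectral (doubleStar 1 n) G) :
    G.Colorable 2 ∧
    (∀ a b c d, G.Adj a b → G.Adj c d → G.Adj a c ∨ G.Adj a d ∨ G.Adj b c ∨ G.Adj b d) ∧
    ∃ β : ℝ, 0 < β ∧ β < 1 ∧ ∃ x : V → ℝ, x ≠ 0 ∧
      ∀ v, ∑ w ∈ G.neighborFinset v, x w = β * x v := by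
  have hA : (G.adjMatrix ℝ).IsHermitian := by
    simp [Matrix.IsHermitian]
  obtain ⟨α, β, hα, hβ0, hβ1, hev⟩ := spectrum_of_cospectral n hn G h hA
  refine ⟨colorable_two_of_trace G fun k hk => ?_, fun a b c d hab hcd =>
    adj_of_two_edges G hA (fun i j hi hj => ?_) hab hcd, β, hβ0, hβ1, ?_⟩
  · rw [trace_pow_eq_sum_eigenvalues hA]
    have : (Finset.univ.val.map fun i => hA.eigenvalues i ^ k).sum = 0 := by
      rw [show (fun i => hA.eigenvalues i ^ k) = (fun x : ℝ => x ^ k) ∘ hA.eigenvalues from rfl,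
        ← Multiset.map_map, hev]
      simp [hk.neg_pow, hk.pos.ne']
    exact this
  · have hc : ((Finset.univ.val.map hA.eigenvalues).filter (1 ≤ ·)).card ≤ 1 := by
      rw [hev, Multiset.filter_add, Multiset.filter_eq_nil.2]
      · simp only [Multiset.insert_eq_cons]
        rw [Multiset.filter_cons_of_pos _ hα.le, Multiset.filter_cons_of_neg _ (by linarith),
          Multiset.filter_cons_of_neg _ (by linarith), Multiset.filter_singleton,
          if_neg (by linarith)]
        simp
      · intro y hy
        rw [Multiset.eq_of_mem_replicate hy]; norm_num
    rw [Multiset.filter_map, Multiset.card_map] at hc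
    have hc' : (Finset.univ.filter fun i => 1 ≤ hA.eigenvalues i).card ≤ 1 := hc
    exact Finset.card_le_one.1 hc' i (by simpa) j (by simpa)
  · have hmem : β ∈ Finset.univ.val.map hA.eigenvalues := by rw [hev]; simp
    obtain ⟨i, -, hi⟩ := Multiset.mem_map.1 hmem
    refine ⟨hA.eigenvectorBasis i, fun h0 => ?_, fun v => ?_⟩
    · have := hA.eigenvectorBasis.orthonormal.ne_zero i
      exact this (by ext v; exact congrFun h0 v)
    · have := congrFun (hA.mulVec_eigenvectorBasis i) v
      rw [SimpleGraph.adjMatrix_mulVec_apply, hi] at this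
      simpa using this

lemma mem_supp_of_adj {V : Type} {G : SimpleGraph V} {c : G.ConnectedComponent} {u v : V}
    (hu : u ∈ c.supp) (h : G.Adj u v) : v ∈ c.supp := by
  rw [ConnectedComponent.mem_supp_iff] at *
  rw [← hu, ConnectedComponent.eq]
  exact h.symm.reachable

/-- if `n ≥ 3` and `G` is cospectral to `P₂(1,n)`, then `G` has exactly one
connected component containing an edge, and that component is bipartite with diameter
exactly 3. -/
theorem cospectral_doubleStar_component (n : ℕ) (hn : 3 ≤ n)
    {V : Type} [Fintype V] [DecidableEq V] (G : SimpleGraph V)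
    (h : Cospectral (doubleStar 1 n) G) :
    (∃! c : G.ConnectedComponent, ∃ u v : V, G.Adj u v ∧ G.connectedComponentMk u = c) ∧
    ∀ c : G.ConnectedComponent, (∃ u v : V, G.Adj u v ∧ G.connectedComponentMk u = c) →
      (G.induce c.supp).Colorable 2 ∧ (G.induce c.supp).diam = 3 := by
  classical
  obtain ⟨⟨f⟩, hedge, β, hβ0, hβ1, x, hx, heig⟩ := spectral_facts n (by omega) G h
  have hunique : ∀ c c' : G.ConnectedComponent,
      (∃ u v : V, G.Adj u v ∧ G.connectedComponentMk u = c) →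
      (∃ u v : V, G.Adj u v ∧ G.connectedComponentMk u = c') → c = c' := by
    rintro _ _ ⟨u, v, huv, rfl⟩ ⟨u', v', huv', rfl⟩
    rw [ConnectedComponent.eq]
    rcases hedge u v u' v' huv huv' with h | h | h | h
    · exact h.reachable
    · exact h.reachable.trans huv'.symm.reachable
    · exact huv.reachable.trans h.reachable
    · exact huv.reachable.trans (h.reachable.trans huv'.symm.reachable)
  have hzero : ∀ v, (∀ w, ¬ G.Adj v w) → x v = 0 := by
    intro v hv
    have hN : G.neighborFinset v = ∅ := by ext w; simp [hv w]
    have := heig v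
    rw [hN, Finset.sum_empty] at this
    exact (mul_eq_zero.1 this.symm).resolve_left hβ0.ne'
  refine ⟨?_, ?_⟩
  · have hex : ∃ u v, G.Adj u v := by
      by_contra! hcon
      exact hx (funext fun v => hzero v (hcon v))
    obtain ⟨u, v, huv⟩ := hex
    exact ⟨_, ⟨u, v, huv, rfl⟩, fun c hc => hunique _ _ hc ⟨u, v, huv, rfl⟩⟩
  · rintro c ⟨a, b, hab, rfl⟩
    set c := G.connectedComponentMk a with hc
    have hac : a ∈ c.supp := rfl
    have hbc : b ∈ c.supp := mem_supp_of_adj hac hab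
    refine ⟨⟨f.comp (Embedding.induce c.supp).toHom⟩, ?_⟩
    set H := G.induce c.supp with hH
    have hconn : H.Connected := c.connected_toSimpleGraph
    have : Nontrivial c.supp := ⟨⟨a, hac⟩, ⟨b, hbc⟩, fun he => hab.ne (congrArg Subtype.val he)⟩
    obtain ⟨y, z, hyz⟩ := H.exists_dist_eq_diam
    apply le_antisymm
    · rw [← hyz]
      -- Edges at the two ends `y`, `z` meet or are joined by an edge, so `y`, `z` are at distance `≤ 3`.
      obtain ⟨y', hy'⟩ := hconn.preconnected.exists_adj_of_nontrivial y
      obtain ⟨z', hz'⟩ := hconn.preconnected.exists_adj_of_nontrivial z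
      have hd1 {p q : c.supp} (hpq : G.Adj p q) : H.dist p q = 1 :=
        dist_eq_one_iff_adj.2 hpq
      have e1 := hd1 hy'
      have e2 := hd1 hz'.symm
      rcases hedge y y' z z' hy' hz' with h | h | h | h
      · have := hd1 h; omega
      · have := hd1 h
        have := hconn.dist_triangle (u := y) (v := z') (w := z); omega
      · have := hd1 h
        have := hconn.dist_triangle (u := y) (v := y') (w := z); omega
      · have := hd1 h
        have := hconn.dist_triangle (u := y) (v := y') (w := z)
        have := hconn.dist_triangle (u := y') (v := z') (w := z); omega
    · by_contra hlt
      have hle (p q : c.supp) : H.dist p q ≤ 2 := by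
        have := dist_le_diam (connected_iff_ediam_ne_top.1 hconn) (u := p) (v := q)
        omega
      have third {i j k : Fin 2} (h1 : i ≠ j) (h2 : i ≠ k) : j = k := by omega
      -- Distances at most `2` make the component complete bipartite.
      have hcomplete {p q : V} (hp : p ∈ c.supp) (hq : q ∈ c.supp) (hpq : f p ≠ f q) :
          G.Adj p q := by
        obtain ⟨w, hw⟩ := hconn.exists_walk_length_eq_dist ⟨p, hp⟩ ⟨q, hq⟩
        have hlen := hle ⟨p, hp⟩ ⟨q, hq⟩
        rw [← hw] at hlen
        match w with
        | .nil => exact absurd rfl hpq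
        | .cons h1 .nil => exact h1
        | .cons (v := m) h1 (.cons h2 .nil) =>
          exact absurd (third (f.valid (G.adj_symm h1)) (f.valid h2)) hpq
        | .cons _ (.cons _ (.cons _ _)) => simp at hlen
      -- Vertices of the same colour now have the same neighbours, hence equal eigenvector entries.
      have hNbr {p q : V} (hp : p ∈ c.supp) (hq : q ∈ c.supp) (hpq : f p = f q) :
          x p = x q := by
        have hN : G.neighborFinset p = G.neighborFinset q := by
          ext w
          simp only [mem_neighborFinset]
          exact ⟨fun hw => hcomplete hq (mem_supp_of_adj hp hw) (hpq ▸ f.valid hw),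
            fun hw => hcomplete hp (mem_supp_of_adj hq hw) (hpq ▸ f.valid hw)⟩
        have := (heig p).symm.trans (hN ▸ heig q)
        exact mul_left_cancel₀ hβ0.ne' this
      have hfab : f a ≠ f b := f.valid hab
      have hdeg {p q : V} (hp : p ∈ c.supp) (hpq : G.Adj p q) :
          β * x p = G.degree p * x q := by
        rw [← heig p, Finset.sum_congr rfl (g := fun _ => x q)]
        · simp
        · intro w hw
          rw [mem_neighborFinset] at hw
          exact hNbr (mem_supp_of_adj hp hw) (mem_supp_of_adj hp hpq)
            (third (f.valid hw) (f.valid hpq))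
      have e1 := hdeg hac hab
      have e2 := hdeg hbc hab.symm
      have hxa : x a ≠ 0 := by
        intro h0
        have hb0 : x b = 0 := by
          rw [h0, mul_zero] at e2
          exact (mul_eq_zero.1 e2).resolve_left hβ0.ne'
        refine hx (funext fun v => ?_)
        by_cases hv : ∃ w, G.Adj v w
        · obtain ⟨w, hw⟩ := hv
          have hvc : v ∈ c.supp := hunique _ _ ⟨v, w, hw, rfl⟩ ⟨a, b, hab, rfl⟩
          by_cases hfv : f v = f a
          · rw [hNbr hvc hac hfv, h0]; rfl
          · rw [hNbr hvc hbc (third (Ne.symm hfv) hfab), hb0]; rfl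
        · push Not at hv
          exact hzero v hv
      have hsq : β ^ 2 = G.degree a * G.degree b := by
        apply mul_right_cancel₀ hxa
        linear_combination β * e1 + (G.degree a : ℝ) * e2
      have ha1 : (1 : ℝ) ≤ G.degree a := by
        exact_mod_cast (G.degree_pos_iff_exists_adj a).2 ⟨b, hab⟩
      have hb1 : (1 : ℝ) ≤ G.degree b := by
        exact_mod_cast (G.degree_pos_iff_exists_adj b).2 ⟨a, hab.symm⟩
      nlinarith
end
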